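/- Let p be an odd prime with p ≡ 2 (mod 3), let s be a positive integer, q = p^{2s}, let h₀ be a positive divisor of p^{s} + 1, and set h = h₀². Then for all integers t, m with 1 ≤ t < m ≤ 2⌈(q + 2p^{s} + 1 − 8h)/(6h)⌉, there exists an optimal (3h−2, 3)-LRC over F_q with parameters [3hm, (3h−2)t + 1, 3h(m−t)]_q, and there exists an optimal (2, 3h−1)-LRC over F_q with parameters [3hm, 2t + 1, 3h(m−t)]_q. -/

import Mathlib

/-- The Hamming weight of a vector: the number of nonzero coordinates. -/
def hammingWt {F : Type*} [Zero F] [DecidableEq F] {n : ℕ} (v : Fin n → F) : ℕ :=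
  (Finset.univ.filter (fun i => v i ≠ 0)).card

/-- The minimum distance of the linear code `C` is at least `d`. -/
def MinDistGe {F : Type*} [Field F] [DecidableEq F] {n : ℕ}
    (C : Submodule F (Fin n → F)) (d : ℕ) : Prop :=
  ∀ c ∈ C, c ≠ 0 → d ≤ hammingWt c

/-- The minimum distance of the linear code `C` is exactly `d`. -/
def MinDistEq {F : Type*} [Field F] [DecidableEq F] {n : ℕ}
    (C : Submodule F (Fin n → F)) (d : ℕ) : Prop :=
  MinDistGe C d ∧ ∃ c ∈ C, c ≠ 0 ∧ hammingWt c = d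

/-- `C` is an `(r, δ)`-locally repairable code: every coordinate `i` has a repair
group `R` containing `i`, of size at most `r + δ - 1`, such that the punctured code
`C|_R` has minimum distance at least `δ` (i.e. every codeword whose restriction to
`R` is nonzero has at least `δ` nonzero coordinates inside `R`). -/
def IsLRC {F : Type*} [Field F] [DecidableEq F] {n : ℕ}
    (C : Submodule F (Fin n → F)) (r δ : ℕ) : Prop :=
  ∀ i : Fin n, ∃ R : Finset (Fin n), i ∈ R ∧ R.card ≤ r + δ - 1 ∧
    ∀ c ∈ C, (∃ j ∈ R, c j ≠ 0) → δ ≤ (R.filter (fun j => c j ≠ 0)).card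

/-- The parameters `[n, k, d]` attain the Singleton-type bound for `(r, δ)`-LRCs:
`d = n - k + 1 - (⌈k/r⌉ - 1)(δ - 1)`  (here `⌈k/r⌉ = (k + r - 1)/r`). -/
def SingletonOptimal (n k d r δ : ℕ) : Prop :=
  (d : ℤ) = (n : ℤ) - (k : ℤ) + 1 - ((((k + r - 1) / r : ℕ) : ℤ) - 1) * ((δ : ℤ) - 1)

/-- There exists an optimal `(r, δ)`-LRC over `F` with parameters `[n, k, d]`. -/
def ExistsOptimalLRC (F : Type*) [Field F] [DecidableEq F] (n k d r δ : ℕ) : Prop :=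
  ∃ C : Submodule F (Fin n → F),
    Module.finrank F C = k ∧ MinDistEq C d ∧ IsLRC C r δ ∧ SingletonOptimal n k d r δ

open Polynomial in
theorem code_exists {F : Type*} [Field F] [DecidableEq F] (m w t r : ℕ) (ht : 1 ≤ t) (htm : t < m)
    (hr : 1 ≤ r) (hrw : r ≤ w) (ζ : Fin m → F) (hζ : Function.Injective ζ)
    (D : Fin m × Fin w → F) (hD : ∀ P, D P ≠ 0)
    (U : Submodule F (Fin m × Fin w → F)) (hU : Module.finrank F U = r) (hDU : D ∈ U)
    (hloc : ∀ g ∈ U, g ≠ 0 → ∀ i, (Finset.univ.filter fun j => g (i, j) = 0).card < r)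
    (hglob : ∀ (c : F) (g : Fin t → (Fin m × Fin w → F)), (∀ k, g k ∈ U) →
      (∃ P, c * (ζ P.1 ^ t * D P ^ t) + ∑ k : Fin t, ζ P.1 ^ (k : ℕ) * D P ^ (t - 1) * g k P ≠ 0) →
      (Finset.univ.filter fun P : Fin m × Fin w => c * (ζ P.1 ^ t * D P ^ t)
        + ∑ k : Fin t, ζ P.1 ^ (k : ℕ) * D P ^ (t - 1) * g k P = 0).card ≤ w * t) :
    ExistsOptimalLRC F (w * m) (r * t + 1) (w * (m - t)) r (w + 1 - r) := by
  classical
  obtain ⟨e⟩ : Nonempty (Fin (w * m) ≃ Fin m × Fin w) :=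
    ⟨Fintype.equivOfCardEq (by simp [mul_comm])⟩
  let Φ : (F × (Fin t → U)) →ₗ[F] (Fin (w * m) → F) :=
    { toFun := fun x i => x.1 * (ζ (e i).1 ^ t * D (e i) ^ t) +
        ∑ k : Fin t, ζ (e i).1 ^ (k : ℕ) * D (e i) ^ (t - 1) * (x.2 k : Fin m × Fin w → F) (e i)
      map_add' := by
        intro x y; funext i
        simp only [Prod.fst_add, Prod.snd_add, Pi.add_apply, Submodule.coe_add, mul_add,
          Finset.sum_add_distrib, add_mul]
        ring
      map_smul' := by
        intro c x; funext i
        simp only [Prod.smul_fst, Prod.smul_snd, Pi.smul_apply, Submodule.coe_smul, smul_eq_mul,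
          RingHom.id_apply, mul_add, Finset.mul_sum]
        congr 1
        · ring
        · exact Finset.sum_congr rfl fun k _ => by ring }
  have hΦ : ∀ x i, Φ x i = x.1 * (ζ (e i).1 ^ t * D (e i) ^ t) +
        ∑ k : Fin t, ζ (e i).1 ^ (k : ℕ) * D (e i) ^ (t - 1) * (x.2 k : Fin m × Fin w → F) (e i) :=
    fun _ _ => rfl
  -- local representation
  let G : (F × (Fin t → U)) → Fin m → (Fin m × Fin w → F) := fun x i =>
    (x.1 * ζ i ^ t) • D + ∑ k : Fin t, ζ i ^ (k : ℕ) • (x.2 k : Fin m × Fin w → F)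
  have hGU : ∀ x i, G x i ∈ U := fun x i => U.add_mem (U.smul_mem _ hDU)
    (U.sum_mem fun k _ => U.smul_mem _ (x.2 k).2)
  have hΦG : ∀ x P, Φ x (e.symm P) = D P ^ (t - 1) * G x P.1 P := by
    intro x P
    rw [hΦ]
    simp only [Equiv.apply_symm_apply, G, Pi.add_apply, Pi.smul_apply, smul_eq_mul,
      Finset.sum_apply, mul_add, Finset.mul_sum]
    obtain ⟨t', rfl⟩ : ∃ t', t = t' + 1 := ⟨t - 1, by omega⟩
    congr 1
    · simp only [Nat.add_sub_cancel]; ring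
    · exact Finset.sum_congr rfl fun k _ => by ring
  have hinj : Function.Injective Φ := by
    rw [injective_iff_map_eq_zero]
    intro x hx
    have hG0 : ∀ i, G x i = 0 := by
      intro i
      by_contra hne
      have h1 := hloc _ (hGU x i) hne i
      have h2 : (Finset.univ.filter fun j => G x i (i, j) = 0) = Finset.univ := by
        ext j
        simp only [Finset.mem_filter, Finset.mem_univ, true_and, iff_true]
        have h3 := hΦG x (i, j)
        rw [hx] at h3
        simpa [hD] using h3.symm
      rw [h2] at h1
      simp at h1
      omega
    have key : ∀ P, ∀ n, ((C (x.1 * D P) * X ^ t + ∑ k : Fin t, C ((x.2 k : Fin m × Fin w → F) P) * X ^ (k : ℕ) : F[X])).coeff n = 0 := by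
      intro P n
      suffices hz : (C (x.1 * D P) * X ^ t + ∑ k : Fin t, C ((x.2 k : Fin m × Fin w → F) P) * X ^ (k : ℕ) : F[X]) = 0 by
        rw [hz, coeff_zero]
      apply Polynomial.eq_zero_of_natDegree_lt_card_of_eval_eq_zero _ hζ
      · intro i
        have h3 := congrFun (hG0 i) P
        simp only [G, Pi.add_apply, Pi.smul_apply, smul_eq_mul,
          Finset.sum_apply, Pi.zero_apply] at h3
        simp only [eval_add, eval_mul, eval_C, eval_pow, eval_X, eval_finsetSum]
        rw [← h3]
        congr 1
        · ring
        · exact Finset.sum_congr rfl fun k _ => by ring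
      · rw [Fintype.card_fin]
        refine lt_of_le_of_lt ?_ htm
        refine (natDegree_add_le _ _).trans (max_le (natDegree_C_mul_X_pow_le _ _) ?_)
        refine natDegree_sum_le_of_forall_le _ _ fun k _ => ?_
        exact (natDegree_C_mul_X_pow_le _ _).trans k.2.le
    have hw : 0 < w := by omega
    have P0 : Fin m × Fin w := (⟨0, by omega⟩, ⟨0, hw⟩)
    ext k
    · have := key P0 t
      simp only [coeff_add, finsetSum_coeff, coeff_C_mul_X_pow, if_true] at this
      rw [Finset.sum_eq_zero] at this
      · simpa [hD] using this
      · intro k _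
        rw [if_neg]
        exact k.2.ne'
    · rename_i P
      have := key P k
      simp only [coeff_add, finsetSum_coeff, coeff_C_mul_X_pow] at this
      rw [if_neg k.2.ne, zero_add, Finset.sum_eq_single k] at this
      · simpa using this
      · intro b _ hb
        rw [if_neg]
        exact fun h => hb (Fin.ext h.symm)
      · simp
  have hzero : ∀ x, Φ x ≠ 0 → (Finset.univ.filter fun i => Φ x i = 0).card ≤ w * t := by
    intro x hx
    have h1 := hglob x.1 (fun k => x.2 k) (fun k => (x.2 k).2) (by
      by_contra hcon
      push Not at hcon
      apply hx
      funext i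
      rw [hΦ]; exact hcon (e i))
    refine le_trans (le_of_eq ?_) h1
    apply Finset.card_bij (fun i _ => e i)
    · intro i hi
      simpa [hΦ] using hi
    · intro i _ j _ h; exact e.injective h
    · intro P hP
      exact ⟨e.symm P, by simpa [hΦ] using hP, by simp⟩
  have hwt : ∀ v : Fin (w * m) → F, hammingWt v + (Finset.univ.filter fun i => v i = 0).card = w * m := by
    intro v
    rw [hammingWt, add_comm, Finset.card_filter_add_card_filter_not]
    simp
  have hsub : w * (m - t) + w * t = w * m := by
    rw [← mul_add, Nat.sub_add_cancel htm.le]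
  refine ⟨LinearMap.range Φ, ?_, ⟨?_, ?_⟩, ?_, ?_⟩
  · rw [LinearMap.finrank_range_of_inj hinj]
    simp [Module.finrank_pi_fintype, hU]
    ring
  · rintro _ ⟨x, rfl⟩ hne
    have h1 := hzero x hne
    have h2 := hwt (Φ x)
    omega
  · -- explicit word
    let S : Finset (Fin m) := Finset.univ.filter fun i => (i : ℕ) < t
    have hS : S.card = t := by
      have : S = (Finset.univ : Finset (Fin t)).map (Fin.castLEEmb htm.le) := by
        ext i
        simp only [S, Finset.mem_filter, Finset.mem_univ, true_and, Finset.mem_map]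
        constructor
        · intro h; exact ⟨⟨i, h⟩, by ext; simp⟩
        · rintro ⟨a, rfl⟩; simp
      rw [this]; simp
    let p : F[X] := ∏ i ∈ S, (X - C (ζ i))
    have hpm : p.Monic := monic_prod_of_monic _ _ fun i _ => monic_X_sub_C _
    have hpd : p.natDegree = t := by
      rw [natDegree_prod_of_monic _ _ fun i _ => monic_X_sub_C _]
      simp [hS]
    let x : F × (Fin t → U) := (1, fun k => ⟨p.coeff k • D, U.smul_mem _ hDU⟩)
    have hx : ∀ i, Φ x i = D (e i) ^ t * p.eval (ζ (e i).1) := by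
      intro i
      rw [hΦ, eval_eq_sum_range, hpd, Finset.sum_range_succ]
      have : p.coeff t = 1 := by rw [← hpd]; exact hpm
      rw [this, Finset.sum_range]
      simp only [x, Pi.smul_apply, smul_eq_mul]
      rw [mul_add, add_comm, Finset.mul_sum]
      congr 1
      · apply Finset.sum_congr rfl
        intro k _
        obtain ⟨t', rfl⟩ : ∃ t', t = t' + 1 := ⟨t - 1, by omega⟩
        simp only [Nat.add_sub_cancel]; ring
      · ring
    have hx0 : ∀ i, Φ x i = 0 ↔ (e i).1 ∈ S := by
      intro i
      rw [hx]
      simp only [mul_eq_zero, pow_eq_zero_iff', hD, false_and, false_or, p, eval_prod, eval_sub,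
        eval_X, eval_C, Finset.prod_eq_zero_iff, sub_eq_zero]
      constructor
      · rintro ⟨a, ha, h⟩; rwa [hζ h]
      · intro h; exact ⟨_, h, rfl⟩
    have hcard : (Finset.univ.filter fun i => Φ x i = 0).card = w * t := by
      have : (Finset.univ.filter fun i => Φ x i = 0).card = (S ×ˢ (Finset.univ : Finset (Fin w))).card := by
        apply Finset.card_bij (fun i _ => e i)
        · intro i hi
          simpa [hx0] using hi
        · intro i _ j _ h; exact e.injective h
        · intro P hP
          exact ⟨e.symm P, by simpa [hx0] using hP, by simp⟩
      rw [this, Finset.card_product, hS]; simp [mul_comm]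
    have h2 := hwt (Φ x)
    refine ⟨Φ x, ⟨x, rfl⟩, ?_, by omega⟩
    intro h0
    rw [h0] at hcard
    simp at hcard
    have : w * t < w * m := Nat.mul_lt_mul_of_pos_left htm (by omega)
    omega
  · intro i0
    refine ⟨Finset.univ.filter fun i => (e i).1 = (e i0).1, by simp, ?_, ?_⟩
    · have : (Finset.univ.filter fun i => (e i).1 = (e i0).1).card = (Finset.univ : Finset (Fin w)).card := by
        apply Finset.card_bij (fun i _ => (e i).2)
        · simp
        · intro i hi j hj h
          simp at hi hj
          exact e.injective (Prod.ext (hi.trans hj.symm) h)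
        · intro b _
          exact ⟨e.symm ((e i0).1, b), by simp, by simp⟩
      rw [this]; simp; omega
    · rintro _ ⟨x, rfl⟩ ⟨j, hj, hne⟩
      set i1 := (e i0).1 with hi1
      have hval : ∀ i, (e i).1 = i1 → (Φ x i = 0 ↔ G x i1 (i1, (e i).2) = 0) := by
        intro i hi
        have := hΦG x (e i)
        rw [Equiv.symm_apply_apply] at this
        rw [this, hi]
        simp [hD, ← hi]
      have hG0 : G x i1 ≠ 0 := by
        intro h0
        apply hne
        rw [hval j (by simpa using hj), h0]; rfl
      have h1 := hloc _ (hGU x i1) hG0 i1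
      have h2 : ((Finset.univ.filter fun i => (e i).1 = i1).filter fun j => Φ x j ≠ 0).card
          = (Finset.univ.filter fun j => ¬ G x i1 (i1, j) = 0).card := by
        apply Finset.card_bij (fun i _ => (e i).2)
        · intro i hi
          simp only [Finset.mem_filter, Finset.mem_univ, true_and] at hi ⊢
          rw [← hval i hi.1]; exact hi.2
        · intro i hi j hj h
          simp at hi hj
          exact e.injective (Prod.ext (hi.1.trans hj.1.symm) h)
        · intro b hb
          simp only [Finset.mem_filter, Finset.mem_univ, true_and] at hb
          refine ⟨e.symm (i1, b), ?_, by simp⟩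
          simp only [Finset.mem_filter, Finset.mem_univ, true_and]
          refine ⟨by simp, ?_⟩
          rw [ne_eq, hval _ (by simp)]
          simpa using hb
      rw [h2]
      have h3 := Finset.card_filter_add_card_filter_not (s := (Finset.univ : Finset (Fin w))) (fun j => G x i1 (i1, j) = 0)
      simp only [Finset.card_univ, Fintype.card_fin] at h3
      omega
  · unfold SingletonOptimal
    have : (r * t + 1 + r - 1) / r = t + 1 := by
      rw [show r * t + 1 + r - 1 = r * (t + 1) by rw [mul_add]; omega]
      exact Nat.mul_div_cancel_left _ (by omega)
    rw [this]
    push_cast [Nat.cast_sub htm.le, Nat.cast_sub (show r ≤ w + 1 by omega)]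
    ring

section curvepairs
open Polynomial

noncomputable def nrm {F : Type*} [Field F] (a : F) (A B : F[X]) : F[X] := A ^ 2 - (X ^ 3 + C a) * B ^ 2

def InL {F : Type*} [Field F] (n : ℕ) (A B : F[X]) : Prop :=
  2 * A.natDegree ≤ n ∧ (B = 0 ∨ 2 * B.natDegree + 3 ≤ n)

theorem cubic_natDegree {F : Type*} [Field F] (a : F) : (X ^ 3 + C a : F[X]).natDegree = 3 :=
  natDegree_X_pow_add_C

theorem cubic_ne {F : Type*} [Field F] (a : F) : (X ^ 3 + C a : F[X]) ≠ 0 := by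
  intro h; have := cubic_natDegree a; rw [h] at this; simp at this

theorem nrm_eq_zero {F : Type*} [Field F] {a : F} {A B : F[X]} (h : nrm a A B = 0) :
    A = 0 ∧ B = 0 := by
  have h1 : A ^ 2 = (X ^ 3 + C a) * B ^ 2 := sub_eq_zero.mp h
  by_cases hB : B = 0
  · subst hB; simpa using h1
  · exfalso
    have h2 := congrArg natDegree h1
    rw [natDegree_mul (cubic_ne a) (pow_ne_zero _ hB), cubic_natDegree, natDegree_pow,
      natDegree_pow] at h2
    omega

theorem InL.mul {F : Type*} [Field F] (a : F) {n k : ℕ} {A B C' E : F[X]} (h1 : InL n A B)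
    (h2 : InL k C' E) : InL (n + k) (A * C' + (X ^ 3 + C a) * (B * E)) (A * E + B * C') := by
  obtain ⟨hA, hB⟩ := h1
  obtain ⟨hC, hE⟩ := h2
  constructor
  · have e1 : (A * C').natDegree ≤ A.natDegree + C'.natDegree := natDegree_mul_le
    have e2 : 2 * ((X ^ 3 + C a) * (B * E)).natDegree ≤ n + k := by
      rcases hB with rfl | hB
      · simp
      rcases hE with rfl | hE
      · simp
      have := natDegree_mul_le (p := (X ^ 3 + C a)) (q := (B * E))
      have := natDegree_mul_le (p := B) (q := E)
      have := cubic_natDegree a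
      omega
    have := natDegree_add_le (A * C') ((X ^ 3 + C a) * (B * E))
    rcases le_max_iff.mp this with h | h <;> omega
  · have e1 : A * E = 0 ∨ 2 * (A * E).natDegree + 3 ≤ n + k := by
      rcases hE with rfl | hE
      · simp
      have := natDegree_mul_le (p := A) (q := E)
      right; omega
    have e2 : B * C' = 0 ∨ 2 * (B * C').natDegree + 3 ≤ n + k := by
      rcases hB with rfl | hB
      · simp
      have := natDegree_mul_le (p := B) (q := C')
      right; omega
    rcases e1 with e1 | e1
    · rw [e1, zero_add]; exact e2
    rcases e2 with e2 | e2
    · rw [e2, add_zero]; exact Or.inr e1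
    right
    have := natDegree_add_le (A * E) (B * C')
    rcases le_max_iff.mp this with h | h <;> omega

theorem InL.add {F : Type*} [Field F] {n : ℕ} {A B C' E : F[X]} (h1 : InL n A B)
    (h2 : InL n C' E) : InL n (A + C') (B + E) := by
  obtain ⟨hA, hB⟩ := h1
  obtain ⟨hC, hE⟩ := h2
  constructor
  · have := natDegree_add_le A C'
    rcases le_max_iff.mp this with h | h <;> omega
  · rcases hB with rfl | hB
    · rw [zero_add]; exact hE
    rcases hE with rfl | hE
    · rw [add_zero]; exact Or.inr hB
    right
    have := natDegree_add_le B E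
    rcases le_max_iff.mp this with h | h <;> omega

theorem InL.smul {F : Type*} [Field F] {n : ℕ} {A B : F[X]} (c : F) (h1 : InL n A B) :
    InL n (c • A) (c • B) := by
  obtain ⟨hA, hB⟩ := h1
  have e1 := natDegree_smul_le c A
  have e2 := natDegree_smul_le c B
  refine ⟨by omega, ?_⟩
  rcases hB with rfl | hB
  · simp
  · right; omega

theorem InL.mono {F : Type*} [Field F] {n k : ℕ} (hnk : n ≤ k) {A B : F[X]} (h1 : InL n A B) :
    InL k A B := by
  obtain ⟨hA, hB⟩ := h1
  exact ⟨by omega, hB.imp id (by omega)⟩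

theorem nrm_natDegree_le {F : Type*} [Field F] (a : F) {n : ℕ} {A B : F[X]} (h : InL n A B) :
    (nrm a A B).natDegree ≤ n := by
  have h2 : InL n A (-B) := by simpa [InL] using h
  have := (h.mul a h2).1
  have e : A * A + (X ^ 3 + C a) * (B * -B) = nrm a A B := by rw [nrm]; ring
  rw [e] at this
  omega

theorem zero_count {F : Type*} [Field F] [DecidableEq F] {a : F} {n : ℕ}
    {A B : F[X]} (h : InL n A B) (hne : ¬ (A = 0 ∧ B = 0)) (S : Finset (F × F))
    (hS : ∀ P ∈ S, P.2 ^ 2 = P.1 ^ 3 + a ∧ A.eval P.1 + P.2 * B.eval P.1 = 0) : S.card ≤ n := by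
  have hN : nrm a A B ≠ 0 := fun h => hne (nrm_eq_zero h)
  have h1 : S.card = ∑ x ∈ S.image Prod.fst, (S.filter fun P => P.1 = x).card :=
    Finset.card_eq_sum_card_image _ _
  have hroot : ∀ P ∈ S, (nrm a A B).IsRoot P.1 := by
    intro P hP
    obtain ⟨e1, e2⟩ := hS P hP
    simp only [nrm, IsRoot.def, eval_sub, eval_pow, eval_mul, eval_add, eval_X, eval_C]
    rw [← e1]
    linear_combination (A.eval P.1 - P.2 * B.eval P.1) * e2
  have hfib : ∀ x ∈ S.image Prod.fst, (S.filter fun P => P.1 = x).card ≤ (nrm a A B).roots.count x := by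
    intro x hx
    rw [count_roots]
    obtain ⟨P0, hP0, rfl⟩ := Finset.mem_image.mp hx
    by_cases hc : (S.filter fun P => P.1 = P0.1).card ≤ 1
    · exact hc.trans ((rootMultiplicity_pos hN).mpr (hroot P0 hP0))
    push Not at hc
    obtain ⟨P, hP, Q, hQ, hPQ⟩ := Finset.one_lt_card.mp hc
    simp only [Finset.mem_filter] at hP hQ
    have hy : P.2 ≠ Q.2 := fun h => hPQ (Prod.ext (hP.2.trans hQ.2.symm) h)
    obtain ⟨e1, e2⟩ := hS P hP.1
    obtain ⟨e3, e4⟩ := hS Q hQ.1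
    rw [hP.2] at e1 e2
    rw [hQ.2] at e3 e4
    have hB : B.eval P0.1 = 0 := by
      have : (P.2 - Q.2) * B.eval P0.1 = 0 := by linear_combination e2 - e4
      exact (mul_eq_zero.mp this).resolve_left (sub_ne_zero.mpr hy)
    have hA : A.eval P0.1 = 0 := by rw [hB] at e2; simpa using e2
    have hm : 2 ≤ (nrm a A B).rootMultiplicity P0.1 := by
      rw [le_rootMultiplicity_iff hN]
      rw [nrm]
      apply dvd_sub
      · exact pow_dvd_pow_of_dvd (dvd_iff_isRoot.mpr hA) 2
      · exact Dvd.dvd.mul_left (pow_dvd_pow_of_dvd (dvd_iff_isRoot.mpr hB) 2) _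
    refine le_trans ?_ hm
    have hsub : (S.filter fun P => P.1 = P0.1) ⊆ {(P0.1, P0.2), (P0.1, -P0.2)} := by
      intro R hR
      simp only [Finset.mem_filter] at hR
      have e5 := (hS R hR.1).1
      have e6 := (hS P0 hP0).1
      rw [hR.2] at e5
      have : (R.2 - P0.2) * (R.2 + P0.2) = 0 := by linear_combination e5 - e6
      simp only [Finset.mem_insert, Finset.mem_singleton, Prod.ext_iff]
      rcases mul_eq_zero.mp this with h | h
      · left; exact ⟨hR.2, sub_eq_zero.mp h⟩
      · right; exact ⟨hR.2, eq_neg_of_add_eq_zero_left h⟩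
    exact (Finset.card_le_card hsub).trans Finset.card_le_two
  calc S.card ≤ ∑ x ∈ S.image Prod.fst, (nrm a A B).roots.count x := h1 ▸ Finset.sum_le_sum hfib
    _ ≤ ∑ x ∈ (nrm a A B).roots.toFinset, (nrm a A B).roots.count x := by
      apply Finset.sum_le_sum_of_subset
      intro x hx
      obtain ⟨P0, hP0, rfl⟩ := Finset.mem_image.mp hx
      rw [Multiset.mem_toFinset, mem_roots hN]
      exact hroot P0 hP0
    _ = (nrm a A B).roots.card := Multiset.toFinset_sum_count_eq _
    _ ≤ _ := (card_roots' _).trans (nrm_natDegree_le a h)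

theorem local_two {F : Type*} [Field F] [DecidableEq F] {a : F} {w : ℕ} (hw : 3 ≤ w)
    {A B C' E : F[X]} (hg : InL (w - 2) A B) (hf : InL w C' E)
    (hg0 : ¬ (A = 0 ∧ B = 0)) (hf0 : ¬ (C' = 0 ∧ E = 0))
    (S S0 : Finset (F × F)) (hSS : S0 ⊆ S) (hSw : S.card = w) (hS0 : w - 2 ≤ S0.card)
    (hinj : Set.InjOn Prod.fst (S : Set (F × F)))
    (hS : ∀ P ∈ S, P.2 ^ 2 = P.1 ^ 3 + a ∧ C'.eval P.1 + P.2 * E.eval P.1 = 0)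
    (hS0' : ∀ P ∈ S0, A.eval P.1 + P.2 * B.eval P.1 = 0) : False := by
  set u := A * C' - (X ^ 3 + C a) * (B * E) with hu
  set v := B * C' - A * E with hv
  have hf' : InL w C' (-E) := by simpa [InL] using hf
  have hm := hg.mul a hf'
  have hu' : A * C' + (X ^ 3 + C a) * (B * -E) = u := by rw [hu]; ring
  have hv' : A * -E + B * C' = v := by rw [hv]; ring
  rw [hu', hv'] at hm
  have hnn : u ^ 2 - (X ^ 3 + C a) * v ^ 2 = nrm a A B * nrm a C' E := by
    rw [hu, hv, nrm, nrm]; ring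
  have hv0 : v = 0 := by
    by_contra hvne
    have h1 : (S0.image Prod.fst).card ≤ v.natDegree := by
      rw [← not_lt]
      intro hlt
      apply hvne
      apply eq_zero_of_natDegree_lt_card_of_eval_eq_zero' v (S0.image Prod.fst) _ hlt
      intro x hx
      obtain ⟨P, hP, rfl⟩ := Finset.mem_image.mp hx
      have e1 := (hS P (hSS hP)).2
      have e2 := hS0' P hP
      simp only [hv, eval_sub, eval_mul]
      linear_combination B.eval P.1 * e1 - E.eval P.1 * e2
    rw [Finset.card_image_of_injOn (hinj.mono (by exact_mod_cast hSS))] at h1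
    have := hm.2.resolve_left hvne
    omega
  have hu0 : u = 0 := by
    apply eq_zero_of_natDegree_lt_card_of_eval_eq_zero' u (S.image Prod.fst)
    · intro x hx
      obtain ⟨P, hP, rfl⟩ := Finset.mem_image.mp hx
      obtain ⟨e0, e1⟩ := hS P hP
      have e2 := congrArg (eval P.1) hnn
      rw [hv0] at e2
      simp only [nrm, eval_sub, eval_pow, eval_mul, eval_add, eval_X, eval_C, eval_zero] at e2
      have : eval P.1 u ^ 2 = 0 := by
        rw [← e0] at e2
        linear_combination e2 + ((A.eval P.1) ^ 2 - P.2 ^ 2 * (B.eval P.1) ^ 2) * (C'.eval P.1 - P.2 * E.eval P.1) * e1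
      exact pow_eq_zero_iff (two_ne_zero) |>.mp this
    · rw [Finset.card_image_of_injOn hinj]
      have := hm.1
      omega
  rw [hu0, hv0] at hnn
  have h3 : nrm a A B * nrm a C' E = 0 := by rw [← hnn]; ring
  rcases mul_eq_zero.mp h3 with h | h
  · exact hg0 (nrm_eq_zero h)
  · exact hf0 (nrm_eq_zero h)

/-- functions on a set of points given by elements of `L(n O)` -/
def Fn {F : Type*} [Field F] {Ω : Type*} (xs ys : Ω → F) (n : ℕ) : Submodule F (Ω → F) where
  carrier := {f | ∃ A B : F[X], InL n A B ∧ ∀ P, f P = A.eval (xs P) + ys P * B.eval (xs P)}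
  zero_mem' := ⟨0, 0, by simp [InL], by simp⟩
  add_mem' := by
    rintro f g ⟨A, B, h, hf⟩ ⟨A', B', h', hg⟩
    exact ⟨A + A', B + B', h.add h', fun P => by simp [hf, hg]; ring⟩
  smul_mem' := by
    rintro c f ⟨A, B, h, hf⟩
    exact ⟨c • A, c • B, h.smul c, fun P => by simp [hf]; ring⟩

theorem Fn_mul {F : Type*} [Field F] {Ω : Type*} {xs ys : Ω → F} {a : F}
    (hc : ∀ P, ys P ^ 2 = xs P ^ 3 + a) {n k : ℕ} {f g : Ω → F} (hf : f ∈ Fn xs ys n)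
    (hg : g ∈ Fn xs ys k) : f * g ∈ Fn xs ys (n + k) := by
  obtain ⟨A, B, h, hf⟩ := hf
  obtain ⟨A', B', h', hg⟩ := hg
  refine ⟨_, _, h.mul a h', fun P => ?_⟩
  simp only [Pi.mul_apply, hf, hg, eval_add, eval_mul, eval_pow, eval_X, eval_C, ← hc]
  ring

theorem Fn_one {F : Type*} [Field F] {Ω : Type*} {xs ys : Ω → F} : (1 : Ω → F) ∈ Fn xs ys 0 :=
  ⟨1, 0, by simp [InL], by simp⟩

theorem Fn_pow {F : Type*} [Field F] {Ω : Type*} {xs ys : Ω → F} {a : F}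
    (hc : ∀ P, ys P ^ 2 = xs P ^ 3 + a) {n : ℕ} {f : Ω → F} (hf : f ∈ Fn xs ys n) (j : ℕ) :
    f ^ j ∈ Fn xs ys (n * j) := by
  induction j with
  | zero => simpa using Fn_one
  | succ j ih => rw [pow_succ, mul_add, mul_one]; exact Fn_mul hc ih hf

theorem Fn_mono {F : Type*} [Field F] {Ω : Type*} {xs ys : Ω → F} {n k : ℕ} (h : n ≤ k) {f : Ω → F}
    (hf : f ∈ Fn xs ys n) : f ∈ Fn xs ys k := by
  obtain ⟨A, B, hh, hf⟩ := hf
  exact ⟨A, B, hh.mono h, hf⟩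

theorem zero_count' {F : Type*} [Field F] [DecidableEq F] {Ω : Type*}
    {xs ys : Ω → F} {a : F}
    (hc : ∀ P, ys P ^ 2 = xs P ^ 3 + a) (hinj : Function.Injective fun P => (xs P, ys P)) {n : ℕ}
    {A B : F[X]} (h : InL n A B) (hne : ¬ (A = 0 ∧ B = 0)) (S : Finset Ω)
    (hS : ∀ P ∈ S, A.eval (xs P) + ys P * B.eval (xs P) = 0) : S.card ≤ n := by
  rw [← Finset.card_image_of_injective S hinj]
  apply zero_count (a := a) h hne
  intro Q hQ
  obtain ⟨P, hP, rfl⟩ := Finset.mem_image.mp hQ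
  exact ⟨hc P, hS P hP⟩

theorem Fn_zero_count {F : Type*} [Field F] [DecidableEq F] {Ω : Type*}
    {xs ys : Ω → F} {a : F}
    (hc : ∀ P, ys P ^ 2 = xs P ^ 3 + a) (hinj : Function.Injective fun P => (xs P, ys P)) {n : ℕ}
    {f : Ω → F} (hf : f ∈ Fn xs ys n) (hne : f ≠ 0) (S : Finset Ω)
    (hS : ∀ P ∈ S, f P = 0) : S.card ≤ n := by
  obtain ⟨A, B, hh, hf⟩ := hf
  refine zero_count' hc hinj hh ?_ S fun P hP => by rw [← hf, hS P hP]
  rintro ⟨rfl, rfl⟩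
  apply hne; funext P; simp [hf]

theorem Fn_finrank {F : Type*} [Field F] [DecidableEq F] {Ω : Type*} [Fintype Ω]
    {xs ys : Ω → F} {a : F}
    (hc : ∀ P, ys P ^ 2 = xs P ^ 3 + a) (hinj : Function.Injective fun P => (xs P, ys P)) {n : ℕ}
    (hn : 1 ≤ n) (hnΩ : n < Fintype.card Ω) : Module.finrank F (Fn xs ys n) = n := by
  let Φ : (degreeLT F (n / 2 + 1) × degreeLT F ((n - 1) / 2)) →ₗ[F] (Ω → F) :=
    { toFun := fun x P => (x.1 : F[X]).eval (xs P) + ys P * (x.2 : F[X]).eval (xs P)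
      map_add' := fun x y => by funext P; simp; ring
      map_smul' := fun c x => by funext P; simp; ring }
  have hL : ∀ A B : F[X], A ∈ degreeLT F (n / 2 + 1) ∧ B ∈ degreeLT F ((n - 1) / 2) ↔ InL n A B := by
    intro A B
    rw [mem_degreeLT, mem_degreeLT]
    constructor
    · rintro ⟨h1, h2⟩
      constructor
      · by_cases hA : A = 0
        · simp [hA]
        · rw [← natDegree_lt_iff_degree_lt hA] at h1
          omega
      · by_cases hB : B = 0
        · exact Or.inl hB
        · right
          rw [← natDegree_lt_iff_degree_lt hB] at h2
          omega
    · rintro ⟨h1, h2⟩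
      constructor
      · refine lt_of_le_of_lt degree_le_natDegree ?_
        exact_mod_cast (by omega)
      · rcases h2 with rfl | h2
        · simp only [degree_zero]; exact WithBot.bot_lt_coe _
        · refine lt_of_le_of_lt degree_le_natDegree ?_
          exact_mod_cast (by omega)
  have hr : LinearMap.range Φ = Fn xs ys n := by
    ext f
    constructor
    · rintro ⟨⟨A, B⟩, rfl⟩
      exact ⟨A, B, (hL _ _).mp ⟨A.2, B.2⟩, fun P => rfl⟩
    · rintro ⟨A, B, h, hf⟩
      obtain ⟨h1, h2⟩ := (hL _ _).mpr h
      exact ⟨(⟨A, h1⟩, ⟨B, h2⟩), by funext P; exact (hf P).symm⟩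
  have hi : Function.Injective Φ := by
    rw [injective_iff_map_eq_zero]
    rintro ⟨A, B⟩ h0
    by_contra hne
    have h3 := zero_count' hc hinj ((hL _ _).mp ⟨A.2, B.2⟩) (by
      rintro ⟨hA, hB⟩
      apply hne
      ext1
      · exact Subtype.ext hA
      · exact Subtype.ext hB) Finset.univ (fun P _ => congrFun h0 P)
    rw [Finset.card_univ] at h3
    omega
  rw [← hr, LinearMap.finrank_range_of_inj hi]
  have hd : ∀ k, Module.finrank F (degreeLT F k) = k := fun k => by
    rw [(degreeLTEquiv F k).finrank_eq]; simp
  have : Module.Finite F (degreeLT F (n / 2 + 1)) := Module.Finite.equiv (degreeLTEquiv F _).symm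
  have : Module.Finite F (degreeLT F ((n - 1) / 2)) := Module.Finite.equiv (degreeLTEquiv F _).symm
  rw [Module.finrank_prod, hd, hd]
  omega

end curvepairs

section zomega

theorem card_comap_mk {A : Type*} [AddCommGroup A] [Finite A] (K : AddSubgroup A)
    (H : AddSubgroup (A ⧸ K)) :
    Nat.card (H.comap (QuotientAddGroup.mk' K)) = Nat.card H * Nat.card K := by
  have h1 := (H.comap (QuotientAddGroup.mk' K)).card_mul_index
  have h2 := H.card_mul_index
  have h3 := K.card_mul_index
  rw [AddSubgroup.index_comap_of_surjective _ (QuotientAddGroup.mk'_surjective K)] at h1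
  have h4 : Nat.card (A ⧸ K) = K.index := rfl
  have h5 : 0 < H.index := Nat.pos_of_ne_zero AddSubgroup.index_ne_zero_of_finite
  apply Nat.eq_of_mul_eq_mul_right h5
  rw [h1, ← h3, ← h4, ← h2]
  ring

theorem exists_ord_r {A : Type*} [AddCommGroup A] [Finite A] (om : A →+ A)
    (hom : ∀ P, P + om P + om (om P) = 0) (r : ℕ) (hr : r.Prime) (hd : r ∣ Nat.card A)
    (l : ℤ) (hl : (r : ℤ) ∣ l ^ 2 + l + 1) :
    ∃ H : AddSubgroup A, Nat.card H = r ∧ ∀ P ∈ H, om P ∈ H := by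
  haveI := Fact.mk hr
  obtain ⟨v, hv⟩ := exists_prime_addOrderOf_dvd_card' r hd
  have hstab : ∀ (u : A) (k : ℤ), om u = k • u → ∀ P ∈ AddSubgroup.zmultiples u,
      om P ∈ AddSubgroup.zmultiples u := by
    rintro u k hu _ ⟨i, rfl⟩
    refine ⟨i * k, ?_⟩
    simp only [map_zsmul, hu, mul_smul]
  by_cases hu : om v + (1 + l) • v = 0
  · refine ⟨AddSubgroup.zmultiples v, by rw [Nat.card_zmultiples, hv], hstab v (-(1 + l)) ?_⟩
    rw [neg_smul]; exact eq_neg_of_add_eq_zero_left hu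
  · set u := om v + (1 + l) • v with hudef
    have hrv : (r : ℤ) • v = 0 := by rw [natCast_zsmul, ← hv]; exact addOrderOf_nsmul_eq_zero v
    have hru : r • u = 0 := by
      rw [← natCast_zsmul, hudef, smul_add, smul_comm, hrv, ← map_zsmul, hrv]; simp
    have huo : addOrderOf u = r := addOrderOf_eq_prime hru hu
    refine ⟨AddSubgroup.zmultiples u, by rw [Nat.card_zmultiples, huo], hstab u l ?_⟩
    obtain ⟨c, hc⟩ := hl
    have h1 : (l ^ 2 + l + 1) • v = 0 := by rw [hc, mul_comm, mul_smul, hrv, smul_zero]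
    have h2 : om (om v) = - v - om v := by
      have := hom v
      rw [eq_sub_iff_add_eq, eq_neg_iff_add_eq_zero, ← this]; abel
    rw [hudef, map_add, map_zsmul, h2, ← sub_eq_zero]
    have h3 : (-v - om v + (1 + l) • om v - l • (om v + (1 + l) • v)) = -((l ^ 2 + l + 1) • v) := by
      module
    rw [h3, h1, neg_zero]

theorem exists_ord_r2 {A : Type*} [AddCommGroup A] [Finite A] (om : A →+ A)
    (hom : ∀ P, P + om P + om (om P) = 0) (r : ℕ) (hr : r.Prime) (hd : r ^ 2 ∣ Nat.card A) :
    ∃ H : AddSubgroup A, Nat.card H = r ^ 2 ∧ ∀ P ∈ H, om P ∈ H := by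
  haveI := Fact.mk hr
  by_cases hl : ∃ l : ℤ, (r : ℤ) ∣ l ^ 2 + l + 1
  · obtain ⟨l, hl⟩ := hl
    obtain ⟨K, hK, hKs⟩ := exists_ord_r om hom r hr ((dvd_pow_self r two_ne_zero).trans hd) l hl
    let om' : A ⧸ K →+ A ⧸ K := QuotientAddGroup.map K K om hKs
    have hom' : ∀ P, P + om' P + om' (om' P) = 0 := by
      intro P
      obtain ⟨P, rfl⟩ := QuotientAddGroup.mk'_surjective K P
      have := congrArg (QuotientAddGroup.mk' K) (hom P)
      exact this
    have hd' : r ∣ Nat.card (A ⧸ K) := by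
      have h3 := K.card_mul_index
      rw [hK] at h3
      rw [← h3, pow_two] at hd
      exact Nat.dvd_of_mul_dvd_mul_left hr.pos hd
    obtain ⟨H, hH, hHs⟩ := exists_ord_r om' hom' r hr hd' l hl
    refine ⟨H.comap (QuotientAddGroup.mk' K), by rw [card_comap_mk, hH, hK, pow_two], ?_⟩
    intro P hP
    exact hHs _ hP
  · obtain ⟨v, hv⟩ := exists_prime_addOrderOf_dvd_card' r ((dvd_pow_self r two_ne_zero).trans hd)
    let K := AddSubgroup.zmultiples v
    have hK : Nat.card K = r := by rw [Nat.card_zmultiples, hv]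
    have hrv : r • v = 0 := by rw [← hv]; exact addOrderOf_nsmul_eq_zero v
    have h2 : om (om v) = - v - om v := by
      have := hom v
      rw [eq_sub_iff_add_eq, eq_neg_iff_add_eq_zero, ← this]; abel
    have hnot : om v ∉ K := by
      rintro ⟨l, hl'⟩
      apply hl
      refine ⟨l, ?_⟩
      have hl2 : om v = l • v := hl'.symm
      have h4 : (l ^ 2 + l + 1) • v = 0 := by
        have := hom v
        rw [hl2, map_zsmul, hl2] at this
        rw [← this]; module
      rw [← hv]
      exact addOrderOf_dvd_iff_zsmul_eq_zero.mpr h4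
    have ho : addOrderOf (QuotientAddGroup.mk' K (om v)) = r := by
      apply addOrderOf_eq_prime
      · rw [← map_nsmul, ← map_nsmul, hrv]; simp
      · intro h
        exact hnot ((QuotientAddGroup.eq_zero_iff _).mp h)
    refine ⟨(AddSubgroup.zmultiples (QuotientAddGroup.mk' K (om v))).comap (QuotientAddGroup.mk' K),
      by rw [card_comap_mk, Nat.card_zmultiples, ho, hK, pow_two], ?_⟩
    have hmem : ∀ P, P ∈ (AddSubgroup.zmultiples (QuotientAddGroup.mk' K (om v))).comap
        (QuotientAddGroup.mk' K) ↔ ∃ i j : ℤ, P = i • v + j • om v := by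
      intro P
      rw [AddSubgroup.mem_comap, AddSubgroup.mem_zmultiples_iff]
      constructor
      · rintro ⟨j, hj⟩
        rw [← map_zsmul] at hj
        have := (QuotientAddGroup.mk'_eq_mk' K).mp hj
        obtain ⟨z, ⟨i, rfl⟩, hz⟩ := this
        exact ⟨i, j, by rw [← hz, add_comm]⟩
      · rintro ⟨i, j, rfl⟩
        refine ⟨j, ?_⟩
        rw [map_add, ← map_zsmul]
        have : QuotientAddGroup.mk' K (i • v) = 0 :=
          (QuotientAddGroup.eq_zero_iff _).mpr ⟨i, rfl⟩
        rw [this, zero_add]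
    intro P hP
    rw [hmem] at hP ⊢
    obtain ⟨i, j, rfl⟩ := hP
    refine ⟨-j, i - j, ?_⟩
    rw [map_add, map_zsmul, map_zsmul, h2]
    module

universe u
theorem exists_ord_sq (n : ℕ) : ∀ {A : Type u} [AddCommGroup A] [Finite A] (om : A →+ A)
    (_ : ∀ P, P + om P + om (om P) = 0) (_ : 0 < n) (_ : n ^ 2 ∣ Nat.card A),
    ∃ H : AddSubgroup A, Nat.card H = n ^ 2 ∧ ∀ P ∈ H, om P ∈ H := by
  induction n using induction_on_primes with
  | zero => intro A _ _ om _ h0; exact absurd h0 (lt_irrefl _)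
  | one =>
    intro A _ _ om _ _ _
    exact ⟨⊥, by simp, by simp⟩
  | prime_mul r n hr ih =>
    intro A _ _ om hom h0 hd
    rw [mul_pow] at hd
    obtain ⟨K, hK, hKs⟩ := exists_ord_r2 om hom r hr (dvd_of_mul_right_dvd hd)
    let om' : A ⧸ K →+ A ⧸ K := QuotientAddGroup.map K K om hKs
    have hom' : ∀ P, P + om' P + om' (om' P) = 0 := by
      intro P
      obtain ⟨P, rfl⟩ := QuotientAddGroup.mk'_surjective K P
      have := congrArg (QuotientAddGroup.mk' K) (hom P)
      exact this
    have hd' : n ^ 2 ∣ Nat.card (A ⧸ K) := by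
      have h3 := K.card_mul_index
      rw [hK] at h3
      rw [← h3] at hd
      exact Nat.dvd_of_mul_dvd_mul_left (pow_pos hr.pos 2) hd
    obtain ⟨H, hH, hHs⟩ := ih om' hom' (Nat.pos_of_mul_pos_left h0) hd'
    refine ⟨H.comap (QuotientAddGroup.mk' K), by rw [card_comap_mk, hH, hK, mul_pow, mul_comm], ?_⟩
    intro P hP
    exact hHs _ hP

end zomega

section curve
open WeierstrassCurve WeierstrassCurve.Affine
universe u

structure EC {F : Type u} [Field F] (a w : F) {A : Type u} [AddCommGroup A]
    (xc yc : A → F) (om : A →+ A) : Prop where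
  eqn : ∀ P, P ≠ 0 → yc P ^ 2 = xc P ^ 3 + a
  surj : ∀ x y, y ^ 2 = x ^ 3 + a → ∃ P, P ≠ 0 ∧ xc P = x ∧ yc P = y
  inj : ∀ P Q, P ≠ 0 → Q ≠ 0 → xc P = xc Q → P = Q ∨ P = -Q
  ext : ∀ P Q, P ≠ 0 → Q ≠ 0 → xc P = xc Q → yc P = yc Q → P = Q
  xneg : ∀ P, xc (-P) = xc P
  yneg : ∀ P, yc (-P) = - yc P
  yadd : ∀ P Q, P ≠ 0 → Q ≠ 0 → xc P ≠ xc Q →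
    yc (P + Q) + yc (P - Q) =
      -2 * yc P * (3 * xc Q ^ 2 * xc P + xc Q ^ 3 + 4 * a) / (xc P - xc Q) ^ 3
  xom : ∀ P, xc (om P) = w * xc P
  yom : ∀ P, yc (om P) = yc P
  om0 : ∀ P, P ≠ 0 → om P ≠ 0
  trace : ∀ P, P + om P + om (om P) = 0

variable {F : Type u} [Field F] [DecidableEq F]

abbrev WC (a : F) : WeierstrassCurve.Affine F := ⟨0, 0, 0, 0, a⟩

theorem WC_eq (a x y : F) : (WC a).Equation x y ↔ y ^ 2 = x ^ 3 + a := by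
  rw [equation_iff]; simp

theorem WC_ns (a : F) (ha : a ≠ 0) (h2 : (2 : F) ≠ 0) (h3 : (3 : F) ≠ 0) (x y : F) :
    (WC a).Nonsingular x y ↔ y ^ 2 = x ^ 3 + a := by
  rw [← WC_eq]
  symm
  apply equation_iff_nonsingular_of_Δ_ne_zero
  simp only [WeierstrassCurve.Δ, b₂, b₄, b₆, b₈]
  have : (432 : F) ≠ 0 := by
    have : (432 : F) = 2 ^ 4 * 3 ^ 3 := by norm_num
    rw [this]; exact mul_ne_zero (pow_ne_zero _ h2) (pow_ne_zero _ h3)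
  have := mul_ne_zero this (pow_ne_zero 2 ha)
  intro h; apply this; linear_combination -h

def WX {a : F} : (WC a).Point → F
  | .zero => 0
  | .some x _ _ => x

def WY {a : F} : (WC a).Point → F
  | .zero => 0
  | .some _ y _ => y

def omf {a : F} (w : F) (hw : ∀ x y, (WC a).Nonsingular x y → (WC a).Nonsingular (w * x) y) :
    (WC a).Point → (WC a).Point
  | .zero => .zero
  | .some x y h => .some (w * x) y (hw x y h)

theorem omf_add {a : F} (w : F)
    (hw : ∀ x y, (WC a).Nonsingular x y → (WC a).Nonsingular (w * x) y)
    (hw1 : w ^ 3 = 1) (P Q : (WC a).Point) :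
    omf w hw (P + Q) = omf w hw P + omf w hw Q := by
  have hw0 : w ≠ 0 := by rintro rfl; simp at hw1
  rcases P with _ | ⟨x1, y1, k1⟩
  · change omf w hw (0 + Q) = 0 + _
    simp
  rcases Q with _ | ⟨x2, y2, k2⟩
  · change omf w hw (_ + 0) = _ + 0
    simp
  by_cases hxy : x1 = x2 ∧ y1 = (WC a).negY x2 y2
  · rw [Point.add_of_Y_eq hxy.1 hxy.2]
    change 0 = Point.some _ _ _ + Point.some _ _ _
    rw [Point.add_of_Y_eq]
    · rw [hxy.1]
    · rw [hxy.2]; simp [negY]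
  · rw [Point.add_some hxy]
    have hxy' : ¬ (w * x1 = w * x2 ∧ y1 = (WC a).negY (w * x2) y2) := by
      simpa [negY, hw0] using hxy
    change Point.some _ _ _ = Point.some _ _ _ + Point.some _ _ _
    rw [Point.add_some hxy']
    have hs : (WC a).slope (w * x1) (w * x2) y1 y2 = w ^ 2 * (WC a).slope x1 x2 y1 y2 := by
      by_cases hx : x1 = x2
      · subst hx
        have hy : y1 ≠ (WC a).negY x1 y2 := fun h => hxy ⟨rfl, h⟩
        have hy' : y1 ≠ (WC a).negY (w * x1) y2 := by simpa [negY] using hy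
        rw [slope_of_Y_ne rfl hy, slope_of_Y_ne rfl hy']
        simp [negY]
        ring
      · have hx' : w * x1 ≠ w * x2 := by simpa [hw0] using hx
        rw [slope_of_X_ne hx, slope_of_X_ne hx']
        have : x1 - x2 ≠ 0 := sub_ne_zero.mpr hx
        rw [← mul_sub]
        field_simp
        linear_combination -(y1 - y2) * hw1
    have hX : w * (WC a).addX x1 x2 ((WC a).slope x1 x2 y1 y2) =
      (WC a).addX (w * x1) (w * x2) ((WC a).slope (w * x1) (w * x2) y1 y2) := by
      rw [hs]; simp only [addX]
      linear_combination (-w * (WC a).slope x1 x2 y1 y2 ^ 2) * hw1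
    have hY : (WC a).addY x1 x2 y1 ((WC a).slope x1 x2 y1 y2) =
      (WC a).addY (w * x1) (w * x2) y1 ((WC a).slope (w * x1) (w * x2) y1 y2) := by
      rw [addY, addY, negAddY, negAddY, ← hX, hs]; simp only [negY, addX]
      generalize (WC a).slope x1 x2 y1 y2 = l
      linear_combination l * (l ^ 2 - x1 - x2 - x1) * hw1
    simp only [Point.some.injEq]
    exact ⟨hX, hY⟩

theorem WC_EC (a w : F) (ha : a ≠ 0) (h2 : (2 : F) ≠ 0) (h3 : (3 : F) ≠ 0)
    (hw : w ^ 2 + w + 1 = 0) :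
    ∃ om : (WC a).Point →+ (WC a).Point, EC a w (WX (a := a)) WY om := by
  have hw1 : w ^ 3 = 1 := by linear_combination (w - 1) * hw
  have hw0 : w ≠ 0 := by rintro rfl; simp at hw
  have hwn : ∀ x y, (WC a).Nonsingular x y → (WC a).Nonsingular (w * x) y := by
    intro x y h
    rw [WC_ns a ha h2 h3] at h ⊢
    rw [mul_pow, hw1, h, one_mul]
  refine ⟨⟨⟨omf w hwn, rfl⟩, omf_add w hwn hw1⟩, ?_⟩
  constructor
  · rintro (_ | ⟨x, y, k⟩) h
    · exact absurd rfl h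
    · exact (WC_ns a ha h2 h3 x y).mp k
  · intro x y h
    exact ⟨.some x y ((WC_ns a ha h2 h3 x y).mpr h), Point.some_ne_zero _, rfl, rfl⟩
  · rintro (_ | ⟨x, y, k⟩) (_ | ⟨x', y', k'⟩) h h' e
    · exact absurd rfl h
    · exact absurd rfl h
    · exact absurd rfl h'
    · exact Point.X_eq_iff.mp e
  · rintro (_ | ⟨x, y, k⟩) (_ | ⟨x', y', k'⟩) h h' e e'
    · exact absurd rfl h
    · exact absurd rfl h
    · exact absurd rfl h'
    · have e : x = x' := e
      have e' : y = y' := e'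
      subst e; subst e'; rfl
  · rintro (_ | ⟨x, y, k⟩) <;> rfl
  · rintro (_ | ⟨x, y, k⟩)
    · simp [WY, ← Point.zero_def]
    · rw [Point.neg_some]; simp [WY, negY]
  · rintro (_ | ⟨x, y, k⟩) (_ | ⟨x', y', k'⟩) h h' e
    · exact absurd rfl h
    · exact absurd rfl h
    · exact absurd rfl h'
    · have e : x ≠ x' := e
      rw [sub_eq_add_neg, Point.neg_some, Point.add_of_X_ne e, Point.add_of_X_ne e]
      rw [WC_ns a ha h2 h3] at k k'
      simp only [WX, WY, addY, negAddY, addX, slope_of_X_ne e]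
      simp only [negY]
      have : x - x' ≠ 0 := sub_ne_zero.mpr e
      trans -2 * y * ((y ^ 2 + 3 * y' ^ 2) - (2 * x + x') * (x - x') ^ 2 + (x - x') ^ 3) /
          (x - x') ^ 3
      · field_simp
        ring
      · rw [k, k']
        congr 1
        ring
  · rintro (_ | ⟨x, y, k⟩)
    · exact (mul_zero w).symm
    · rfl
  · rintro (_ | ⟨x, y, k⟩) <;> rfl
  · rintro (_ | ⟨x, y, k⟩) h
    · exact absurd rfl h
    · exact Point.some_ne_zero _
  · rintro (_ | ⟨x, y, k⟩)
    · change (0 : (WC a).Point) + 0 + 0 = 0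
      simp
    · have kk := (WC_ns a ha h2 h3 x y).mp k
      change Point.some x y k + Point.some (w * x) y _ + Point.some (w * (w * x)) y _ = 0
      rw [← eq_neg_iff_add_eq_zero, Point.neg_some]
      by_cases hx : x = 0
      · subst hx
        have hy0 : y ≠ 0 := by rintro rfl; apply ha; linear_combination -kk
        have hy : y ≠ (WC a).negY (w * 0) y := by
          simp only [negY]; intro h
          apply mul_ne_zero h2 hy0
          linear_combination h
        rw [Point.add_of_Y_ne hy]
        have hsl : (WC a).slope 0 (w * 0) y y = 0 := by
          rw [slope_of_Y_ne (show (0 : F) = w * 0 by simp) hy]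
          simp
        simp only [Point.some.injEq]
        simp only [hsl, addX, addY, negAddY, negY]
        constructor <;> ring
      · have hne : x ≠ w * x := by
          intro h
          have : w = 1 := by
            apply mul_right_cancel₀ hx; rw [← h, one_mul]
          apply h3; rw [this] at hw; linear_combination hw
        rw [Point.add_of_X_ne hne]
        simp [slope_of_X_ne hne, addX, addY, negAddY, negY]
        linear_combination - x * hw

theorem WC_card [Fintype F] (a : F) (ha : a ≠ 0) (h2 : (2 : F) ≠ 0) (h3 : (3 : F) ≠ 0) :
    Finite (WC a).Point ∧ Nat.card (WC a).Point =
      (Finset.univ.filter (fun P : F × F => P.2 ^ 2 = P.1 ^ 3 + a)).card + 1 := by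
  have e : (WC a).Point ≃ Option {xy : F × F // (WC a).Nonsingular xy.fst xy.snd} :=
    nonsingularPointEquiv (WC a)
  refine ⟨Finite.of_equiv _ e.symm, ?_⟩
  rw [Nat.card_congr e, Finite.card_option]
  congr 1
  rw [Nat.card_congr (Equiv.subtypeEquivRight (fun xy : F × F => WC_ns a ha h2 h3 xy.1 xy.2)),
    Nat.card_eq_fintype_card, Fintype.card_subtype]

end curve

section count

theorem eis_descent (p : ℕ) (hp : p.Prime) (hp3 : p % 3 = 2) (hodd : Odd p) (s : ℕ) :
    ∀ A B : ℤ, A ^ 2 - A * B + B ^ 2 = (p : ℤ) ^ (2 * s) →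
    ∃ A' B' : ℤ, A = p ^ s * A' ∧ B = p ^ s * B' ∧ A' ^ 2 - A' * B' + B' ^ 2 = 1 := by
  induction s with
  | zero => intro A B h; exact ⟨A, B, by simp, by simp, by simpa using h⟩
  | succ s ih =>
    intro A B h
    have := Fact.mk hp
    have hpA : (p : ℤ) ∣ A ∧ (p : ℤ) ∣ B := by
      have h1 : ((A : ZMod p)) ^ 2 - A * B + (B : ZMod p) ^ 2 = 0 := by
        have := congrArg (fun z : ℤ => (z : ZMod p)) h
        simpa using this
      have hcube : (A : ZMod p) ^ 3 = (-B) ^ 3 := by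
        linear_combination (A + B : ZMod p) * h1
      have hinj : (A : ZMod p) = - B := by
        have hcard : (p - 1).Coprime 3 := by
          rw [Nat.coprime_comm, Nat.Prime.coprime_iff_not_dvd Nat.prime_three]
          have := hp.two_le
          omega
        by_cases hB : (B : ZMod p) = 0
        · rw [hB] at hcube ⊢
          simpa using hcube
        have hA : (A : ZMod p) ≠ 0 := by
          intro hA; rw [hA] at hcube
          apply hB
          have : (-(B : ZMod p)) ^ 3 = 0 := by rw [← hcube]; simp
          simpa using this
        have hx : ((A : ZMod p) / (-B)) ^ 3 = 1 := by
          rw [div_pow, hcube, div_self]; simpa using hB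
        have hx2 : ((A : ZMod p) / (-B)) ^ (p - 1) = 1 :=
          ZMod.pow_card_sub_one_eq_one (div_ne_zero hA (neg_ne_zero.mpr hB))
        have h3 := orderOf_dvd_of_pow_eq_one hx
        have h4 := orderOf_dvd_of_pow_eq_one hx2
        have h5 := Nat.eq_one_of_dvd_coprimes hcard h4 h3
        rw [orderOf_eq_one_iff] at h5
        rwa [div_eq_one_iff_eq (neg_ne_zero.mpr hB)] at h5
      have h3B : (3 : ZMod p) * B ^ 2 = 0 := by
        rw [hinj] at h1; linear_combination h1
      have h3 : (3 : ZMod p) ≠ 0 := by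
        intro h
        have : ((3 : ℕ) : ZMod p) = 0 := by exact_mod_cast h
        rw [ZMod.natCast_eq_zero_iff] at this
        rw [Nat.prime_dvd_prime_iff_eq hp Nat.prime_three] at this
        omega
      have hB : (B : ZMod p) = 0 := by
        rcases mul_eq_zero.mp h3B with h | h
        · exact absurd h h3
        · simpa using h
      rw [hB, neg_zero] at hinj
      exact ⟨(ZMod.intCast_zmod_eq_zero_iff_dvd _ _).mp hinj,
        (ZMod.intCast_zmod_eq_zero_iff_dvd _ _).mp hB⟩
    obtain ⟨⟨a, rfl⟩, ⟨b, rfl⟩⟩ := hpA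
    have hp0 : (p : ℤ) ^ 2 ≠ 0 := by exact_mod_cast pow_ne_zero 2 hp.ne_zero
    obtain ⟨A', B', hA, hB, hn⟩ := ih a b (by
      apply mul_left_cancel₀ hp0
      rw [show 2 * (s + 1) = 2 + 2 * s by ring, pow_add] at h
      rw [← h]; ring)
    exact ⟨A', B', by rw [hA]; ring, by rw [hB]; ring, hn⟩

theorem eis_unit (A B : ℤ) (h : A ^ 2 - A * B + B ^ 2 = 1) (w : ℂ) (hw : w ^ 2 + w + 1 = 0) :
    ((A : ℂ) + B * w ^ 2) ^ 6 = 1 := by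
  have hw3 : w ^ 3 = 1 := by linear_combination (w - 1) * hw
  have hA : -1 ≤ A ∧ A ≤ 1 := by constructor <;> nlinarith [sq_nonneg (2 * B - A)]
  have hB : -1 ≤ B ∧ B ≤ 1 := by constructor <;> nlinarith [sq_nonneg (2 * A - B)]
  obtain ⟨a1, a2⟩ := hA
  obtain ⟨b1, b2⟩ := hB
  have hw12 : w ^ 12 = 1 := by rw [show 12 = 3 * 4 by norm_num, pow_mul, hw3, one_pow]
  have hw6 : w ^ 6 = 1 := by rw [show 6 = 3 * 2 by norm_num, pow_mul, hw3, one_pow]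
  interval_cases A <;> interval_cases B <;> first | (exfalso; revert h; norm_num; done) | skip
  · push_cast; rw [show (-1 + -1 * w ^ 2) = w by linear_combination -hw, hw6]
  · norm_num
  · push_cast; linear_combination hw12
  · push_cast; linear_combination hw12
  · norm_num
  · push_cast; rw [show (1 + 1 * w ^ 2) = -w by linear_combination hw]; linear_combination hw6


theorem cube_roots {F : Type*} [Field F] [Fintype F] [DecidableEq F] (w : F)
    (hw : w ^ 2 + w + 1 = 0) (h3 : (3 : F) ≠ 0) (x : F) (hx : x ≠ 0) :
    (Finset.univ.filter (fun y : F => y ^ 3 = x ^ 3)).card = 3 := by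
  have hw1 : w ≠ 1 := by rintro rfl; apply h3; linear_combination hw
  have hw0 : w ≠ 0 := by rintro rfl; simp at hw
  have hw3 : w ^ 3 = 1 := by linear_combination (w - 1) * hw
  have : Finset.univ.filter (fun y : F => y ^ 3 = x ^ 3) = {x, w * x, w ^ 2 * x} := by
    ext y
    simp only [Finset.mem_filter, Finset.mem_univ, true_and, Finset.mem_insert,
      Finset.mem_singleton]
    have : y ^ 3 = x ^ 3 ↔ (y - x) * ((y - w * x) * (y - w ^ 2 * x)) = 0 := by
      rw [← sub_eq_zero]
      have : y ^ 3 - x ^ 3 = (y - x) * ((y - w * x) * (y - w ^ 2 * x)) := by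
        linear_combination (x * y ^ 2 - w * x ^ 2 * y + (w - 1) * x ^ 3 - x ^ 2 * y * 0) * hw + 0 * hw3
      rw [this]
    rw [this]
    simp only [mul_eq_zero, sub_eq_zero]
  rw [this, Finset.card_eq_three]
  refine ⟨_, _, _, ?_, ?_, ?_, rfl⟩
  · intro h; apply hw1; apply mul_right_cancel₀ hx; rw [← h, one_mul]
  · intro h
    have h1 : w ^ 2 = 1 := by apply mul_right_cancel₀ hx; rw [← h, one_mul]
    apply hw1; rw [← hw3, pow_succ, h1, one_mul]
  · intro h
    have h1 := mul_right_cancel₀ hx h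
    apply hw1; apply mul_left_cancel₀ hw0; rw [mul_one, ← pow_two, ← h1]

theorem cube_count {F : Type*} [Field F] [Fintype F] [DecidableEq F] (w : F)
    (hw : w ^ 2 + w + 1 = 0) (h3 : (3 : F) ≠ 0) (ψ : MulChar F ℂ)
    (g : Fˣ) (hg : ∀ x : Fˣ, x ∈ Subgroup.zpowers g) (hψ : IsPrimitiveRoot (ψ g) 3) (u : F) :
    ((Finset.univ.filter (fun y : F => y ^ 3 = u)).card : ℂ) = 1 + ψ u + ψ u ^ 2 := by
  have hz : ∀ k : ℤ, ψ ((g ^ k : Fˣ) : F) = ψ g ^ k := by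
    intro k
    have := congrArg Units.val (ψ.toUnitHom.map_zpow g k)
    rw [Units.val_zpow_eq_zpow_val] at this
    simpa only [MulChar.coe_toUnitHom] using this
  by_cases hu : u = 0
  · subst hu
    have : Finset.univ.filter (fun y : F => y ^ 3 = 0) = {0} := by
      ext y; simp
    rw [this, MulChar.map_zero]; simp
  · obtain ⟨k, hk⟩ := hg (Units.mk0 u hu)
    have hku : ψ u = ψ g ^ k := by
      have h1 : u = ((g ^ k : Fˣ) : F) := by
        have := congrArg Units.val hk
        simpa using this.symm
      rw [h1]
      exact hz k
    by_cases hc : (3 : ℤ) ∣ k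
    · obtain ⟨j, rfl⟩ := hc
      have h1 : ψ u = 1 := by
        rw [hku, zpow_mul]
        rw [show (3 : ℤ) = ((3 : ℕ) : ℤ) from rfl, zpow_natCast, hψ.pow_eq_one, one_zpow]
      have h2 : u = ((g ^ j : Fˣ) : F) ^ 3 := by
        have := congrArg Units.val hk
        simp only [Units.val_mk0] at this
        rw [← this, ← Units.val_pow_eq_pow_val, mul_comm, zpow_mul]
        rfl
      rw [h1, h2, cube_roots w hw h3 _ (Units.ne_zero _)]
      norm_num
    · have h1 : ψ u ≠ 1 := by
        rw [hku]; intro h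
        exact hc ((hψ.zpow_eq_one_iff_dvd k).mp h)
      have h30 : ψ u ^ 3 = 1 := by
        rw [hku, ← zpow_natCast, ← zpow_mul, mul_comm, zpow_mul]
        rw [zpow_natCast, hψ.pow_eq_one, one_zpow]
      have h4 : Finset.univ.filter (fun y : F => y ^ 3 = u) = ∅ := by
        rw [Finset.filter_eq_empty_iff]
        rintro y _ rfl
        have hy : y ≠ 0 := by rintro rfl; simp at hu
        obtain ⟨i, hi⟩ := hg (Units.mk0 y hy)
        apply h1
        rw [map_pow]
        have h1 : y = ((g ^ i : Fˣ) : F) := by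
          have := congrArg Units.val hi
          simpa using this.symm
        have : ψ y = ψ g ^ i := by
          rw [h1]
          exact hz i
        rw [this, ← zpow_natCast, ← zpow_mul, mul_comm, zpow_mul]
        rw [zpow_natCast, hψ.pow_eq_one, one_zpow]
      rw [h4]
      have h5 : (ψ u - 1) * (1 + ψ u + ψ u ^ 2) = 0 := by linear_combination h30
      rcases mul_eq_zero.mp h5 with h | h
      · exact absurd (sub_eq_zero.mp h) h1
      · rw [h]; simp


theorem point_count (p : ℕ) (hp : p.Prime) (hodd : Odd p) (hp3 : p % 3 = 2)
    (s : ℕ) (hs : 0 < s) {F : Type*} [Field F] [Fintype F] [DecidableEq F]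
    (hF : Fintype.card F = p ^ (2 * s)) (h2 : ringChar F ≠ 2) (h3 : (3 : F) ≠ 0)
    (w : F) (hw : w ^ 2 + w + 1 = 0) :
    ∃ a : F, a ≠ 0 ∧
      (Finset.univ.filter (fun P : F × F => P.2 ^ 2 = P.1 ^ 3 + a)).card = p ^ (2 * s) + 2 * p ^ s := by
  obtain ⟨ω, hω⟩ : ∃ ω : ℂ, IsPrimitiveRoot ω 3 := ⟨_, Complex.isPrimitiveRoot_exp 3 (by norm_num)⟩
  have h3d : 3 ∣ Fintype.card F - 1 := by
    rw [hF, pow_mul]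
    have h1 : (p ^ 2) % 3 = 1 := by rw [Nat.pow_mod, hp3]
    have h2 : (p ^ 2) ^ s % 3 = 1 := by simp [Nat.pow_mod (p ^ 2) s 3, h1]
    omega
  obtain ⟨ψ, hψ⟩ := MulChar.exists_mulChar_orderOf F h3d hω
  obtain ⟨g, hg⟩ := IsCyclic.exists_generator (α := Fˣ)
  have hψ3 : ψ ^ 3 = 1 := by rw [← hψ]; exact pow_orderOf_eq_one ψ
  have hψ1 : ψ ≠ 1 := by
    rintro rfl; simp at hψ
  have hg3 : ψ g ^ 3 = 1 := by
    rw [← MulChar.pow_apply_coe, hψ3, MulChar.one_apply_coe]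
  have hpow : ∀ (φ : MulChar F ℂ) (k : ℤ), φ ((g ^ k : Fˣ) : F) = φ g ^ k := by
    intro φ k
    have := congrArg Units.val (φ.toUnitHom.map_zpow g k)
    rw [Units.val_zpow_eq_zpow_val] at this
    simpa only [MulChar.coe_toUnitHom] using this
  have hprim : IsPrimitiveRoot (ψ g) 3 := by
    have hne : ψ g ≠ 1 := by
      intro h
      apply hψ1
      apply MulChar.ext
      intro x
      obtain ⟨k, rfl⟩ := hg x
      rw [MulChar.one_apply_coe]
      simp only [hpow, h, one_zpow]
    have := orderOf_eq_prime hg3 hne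
    rw [← this]; exact IsPrimitiveRoot.orderOf _
  set η := ψ g with hη
  have hη2 : η ^ 2 + η + 1 = 0 := by
    have h1 : η ≠ 1 := hprim.ne_one (by norm_num)
    have h2 : (η - 1) * (η ^ 2 + η + 1) = 0 := by linear_combination hg3
    rcases mul_eq_zero.mp h2 with h | h
    · exact absurd (sub_eq_zero.mp h) h1
    · exact h
  set χ : MulChar F ℂ := (quadraticChar F).ringHomComp (Int.castRingHom ℂ) with hχ
  have hχa : ∀ x, χ x = ((quadraticChar F x : ℤ) : ℂ) := fun x => rfl
  have hχi : χ⁻¹ = χ := by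
    exact (MulChar.IsQuadratic.comp (quadraticChar_isQuadratic F) _).inv
  have hψi : ∀ x, ψ⁻¹ x = ψ x ^ 2 := by
    intro x
    have : ψ⁻¹ = ψ ^ 2 := by
      rw [inv_eq_iff_mul_eq_one, ← pow_succ', hψ3]
    rw [this, MulChar.pow_apply' _ (by norm_num)]
  have hχ1 : χ ≠ 1 := by
    obtain ⟨y, hy⟩ := quadraticChar_exists_neg_one' h2
    intro h
    have h4 := hχa y
    rw [h, MulChar.one_apply_coe, hy] at h4
    norm_num at h4
  have hχψ : ψ * χ ≠ 1 := by
    intro h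
    have : ψ⁻¹ = χ := inv_eq_of_mul_eq_one_right h
    have h5 : ψ ^ 2 = 1 := by
      rw [pow_two]
      nth_rewrite 1 [← inv_inv ψ]
      rw [this, hχi, ← this, inv_mul_cancel]
    have := orderOf_dvd_of_pow_eq_one h5
    rw [hψ] at this
    omega
  -- integrality
  have hpow3 : ∀ x, x ≠ 0 → ∃ i, ψ x = η ^ i ∧ i < 3 := by
    intro x hx
    obtain ⟨k, hk⟩ := hg (Units.mk0 x hx)
    have h1 : ψ x ^ 3 = 1 := by
      have h7 : x = ((g ^ k : Fˣ) : F) := by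
        have := congrArg Units.val hk
        exact this.symm
      rw [h7, hpow, ← hη, ← zpow_natCast, ← zpow_mul, mul_comm, zpow_mul, zpow_natCast, hg3,
        one_zpow]
    obtain ⟨i, hi, h⟩ := hprim.eq_pow_of_pow_eq_one h1
    exact ⟨i, h.symm, hi⟩
  have hint : ∀ x : F, ∃ AB : ℤ × ℤ, ψ x * χ (1 - x) = AB.1 + AB.2 * η ∧
      ψ⁻¹ x * χ⁻¹ (1 - x) = AB.1 + AB.2 * η ^ 2 := by
    intro x
    rw [hψi, hχi, hχa]
    generalize quadraticChar F (1 - x) = n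
    by_cases hx : x = 0
    · exact ⟨(0, 0), by rw [hx, MulChar.map_zero]; simp⟩
    obtain ⟨i, hi, hi3⟩ := hpow3 x hx
    rw [hi]
    interval_cases i
    · exact ⟨(n, 0), by simp, by simp⟩
    · exact ⟨(0, n), by push_cast; ring, by push_cast; ring⟩
    · refine ⟨(-n, -n), by push_cast; linear_combination n * hη2, ?_⟩
      push_cast
      linear_combination n * η * hg3 + n * hη2
  choose AB hAB1 hAB2 using hint
  obtain ⟨A, hA⟩ : ∃ A, A = ∑ x, (AB x).1 := ⟨_, rfl⟩
  obtain ⟨B, hB⟩ : ∃ B, B = ∑ x, (AB x).2 := ⟨_, rfl⟩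
  have hJ : jacobiSum ψ χ = A + B * η := by
    rw [jacobiSum, Finset.sum_congr rfl (fun x _ => hAB1 x), Finset.sum_add_distrib,
      ← Finset.sum_mul, hA, hB]
    push_cast; rfl
  have hJ' : jacobiSum ψ⁻¹ χ⁻¹ = A + B * η ^ 2 := by
    rw [jacobiSum, Finset.sum_congr rfl (fun x _ => hAB2 x), Finset.sum_add_distrib,
      ← Finset.sum_mul, hA, hB]
    push_cast; rfl
  have hrc : ringChar ℂ ≠ ringChar F := by
    rw [ringChar.eq_zero]
    exact (CharP.ringChar_ne_zero_of_finite F).symm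
  have hJJ := jacobiSum_mul_jacobiSum_inv hrc hψ1 hχ1 hχψ
  have hAB : A ^ 2 - A * B + B ^ 2 = (p : ℤ) ^ (2 * s) := by
    rw [hJ, hJ', hF] at hJJ
    have : ((A ^ 2 - A * B + B ^ 2 : ℤ) : ℂ) = ((p ^ (2 * s) : ℤ) : ℂ) := by
      push_cast
      push_cast at hJJ
      rw [← hJJ]
      linear_combination - A * B * hη2 - B ^ 2 * hg3
    exact_mod_cast this
  obtain ⟨A', B', hA', hB', hn⟩ := eis_descent p hp hp3 hodd s A B hAB
  have hu6 := eis_unit A' B' hn η hη2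
  -- the generator has quadratic character -1
  have hχg : χ g = -1 := by
    rcases quadraticChar_dichotomy (F := F) (a := g) (Units.ne_zero g) with h | h
    · exfalso
      apply hχ1
      apply MulChar.ext
      intro x
      obtain ⟨k, rfl⟩ := hg x
      rw [MulChar.one_apply_coe]
      simp only [hpow, hχa, h]
      simp
    · rw [hχa, h]; simp
  have hprim6 : IsPrimitiveRoot (-η) 6 := by
    rw [IsPrimitiveRoot.iff_def]
    have e6 : (-η) ^ 6 = 1 := by linear_combination (η ^ 3 + 1) * hg3
    refine ⟨e6, fun l hl => ?_⟩
    have hl2 : η ^ (2 * l) = 1 := by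
      have : η ^ (2 * l) = ((-η) ^ l) ^ 2 := by
        rw [← pow_mul, mul_comm l 2, pow_mul, pow_mul, neg_sq]
      rw [this, hl, one_pow]
    have h3l : 3 ∣ l := by
      have := (hprim.pow_eq_one_iff_dvd _).mp hl2
      omega
    obtain ⟨j, rfl⟩ := h3l
    rw [pow_mul, show (-η) ^ 3 = -1 by linear_combination -hg3] at hl
    rcases Nat.even_or_odd j with hj | hj
    · obtain ⟨i, rfl⟩ := hj
      exact ⟨i, by ring⟩
    · rw [hj.neg_one_pow] at hl
      norm_num at hl
  obtain ⟨k, hk6, hk⟩ := hprim6.eq_pow_of_pow_eq_one hu6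
  refine ⟨((g ^ k : Fˣ) : F), Units.ne_zero _, ?_⟩
  have ha0 : ((g ^ k : Fˣ) : F) ≠ 0 := Units.ne_zero _
  have hψa : ψ ((g ^ k : Fˣ) : F) = η ^ k := by
    have := hpow ψ k; simpa only [zpow_natCast] using this
  have hχak : χ ((g ^ k : Fˣ) : F) = (-1) ^ k := by
    have := hpow χ k; simpa only [zpow_natCast, hχg] using this
  generalize ((g ^ k : Fˣ) : F) = a at ha0 hψa hχak
  have hneg : ψ (-1) = 1 := by
    have h1 : ψ (-1) ^ 2 = 1 := by rw [← map_pow]; simp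
    have h3 : ψ (-1) ^ 3 = 1 := by
      obtain ⟨i, hi, _⟩ := hpow3 (-1) (by simp)
      rw [hi, ← pow_mul, mul_comm, pow_mul, hg3, one_pow]
    rw [pow_succ, h1, one_mul] at h3
    exact h3
  have key : ∀ φ : MulChar F ℂ, ∑ u, χ (u + a) * φ u = χ a * φ (-a) * jacobiSum φ χ := by
    intro φ
    rw [jacobiSum, Finset.mul_sum]
    symm
    apply Fintype.sum_equiv (Equiv.mulLeft₀ (-a) (neg_ne_zero.mpr ha0))
    intro v
    change _ = χ (-a * v + a) * φ (-a * v)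
    rw [show -a * v + a = a * (1 - v) by ring, map_mul, map_mul]
    ring
  have hsum0 : ∑ u : F, χ (u + a) = 0 := by
    rw [Fintype.sum_equiv (Equiv.addRight a) (fun u => χ (u + a)) χ (fun u => rfl)]
    exact MulChar.sum_eq_zero_of_ne_one hχ1
  have hcount : (((Finset.univ.filter (fun P : F × F => P.2 ^ 2 = P.1 ^ 3 + a)).card : ℕ) : ℂ) =
      (p ^ (2 * s) + 2 * p ^ s : ℕ) := by
    have e1 : (Finset.univ.filter (fun P : F × F => P.2 ^ 2 = P.1 ^ 3 + a)).card =
        ∑ x : F, (Finset.univ.filter (fun y : F => y ^ 2 = x ^ 3 + a)).card := by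
      simp only [Finset.card_filter]
      rw [← Finset.univ_product_univ, Finset.sum_product]
    have e2 : ∀ c : F, ((Finset.univ.filter (fun y : F => y ^ 2 = c)).card : ℂ) = χ c + 1 := by
      intro c
      have := quadraticChar_card_sqrts h2 c
      rw [hχa]
      have h6 : ({x | x ^ 2 = c} : Set F).toFinset = Finset.univ.filter (fun y : F => y ^ 2 = c) := by
        ext; simp
      rw [h6] at this
      exact_mod_cast this
    have e3 : ∑ x : F, χ (x ^ 3 + a) =
        ∑ u : F, ((Finset.univ.filter (fun y : F => y ^ 3 = u)).card : ℂ) * χ (u + a) := by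
      rw [← Finset.sum_fiberwise Finset.univ (fun x : F => x ^ 3) (fun x => χ (x ^ 3 + a))]
      apply Finset.sum_congr rfl
      intro u _
      rw [Finset.sum_congr rfl (g := fun _ => χ (u + a))]
      · rw [Finset.sum_const, nsmul_eq_mul]
      · intro x hx
        rw [(Finset.mem_filter.mp hx).2]
    have e4 : ∑ x : F, χ (x ^ 3 + a) = 2 * (p : ℂ) ^ s := by
      rw [e3]
      simp only [cube_count w hw h3 ψ g hg hprim]
      have e5 : ∀ u, (1 + ψ u + ψ u ^ 2) * χ (u + a) =
          χ (u + a) + χ (u + a) * ψ u + χ (u + a) * ψ⁻¹ u := by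
        intro u; rw [hψi]; ring
      simp only [e5, Finset.sum_add_distrib]
      rw [hsum0, key, key, hψi, ← neg_one_mul a, map_mul ψ, hneg, hψa, hχak, hJ]
      have hJ2 : jacobiSum ψ⁻¹ χ = A + B * η ^ 2 := by rw [← hJ', hχi]
      rw [hJ2, hA', hB']
      push_cast
      have f1 : (-1 : ℂ) ^ k * η ^ k = A' + B' * η ^ 2 := by
        rw [← hk, ← mul_pow]; ring
      have f3 : ((A' : ℂ) + B' * η) * (A' + B' * η ^ 2) = 1 := by
        have : ((A' ^ 2 - A' * B' + B' ^ 2 : ℤ) : ℂ) = 1 := by rw [hn]; simp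
        push_cast at this
        rw [← this]
        linear_combination A' * B' * hη2 + B' ^ 2 * hg3
      have f2 : (-1 : ℂ) ^ k * (η ^ k) ^ 2 = A' + B' * η := by
        have hne : (A' : ℂ) + B' * η ^ 2 ≠ 0 := right_ne_zero_of_mul_eq_one f3
        apply mul_right_cancel₀ hne
        rw [f3, ← f1]
        have : (-1 : ℂ) ^ k * (η ^ k) ^ 2 * ((-1) ^ k * η ^ k) = ((-1) ^ 2) ^ k * (η ^ 3) ^ k := by
          rw [← pow_mul, ← pow_mul]; ring
        rw [this, hg3]; simp
      have g1 : (-1 : ℂ) ^ k * (1 * η ^ k) = A' + B' * η ^ 2 := by rw [← f1]; ring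
      have g2 : (-1 : ℂ) ^ k * (1 * η ^ k) ^ 2 = A' + B' * η := by rw [← f2]; ring
      rw [g1, g2]
      linear_combination (2 * (p : ℂ) ^ s) * f3
    rw [e1]
    push_cast
    simp only [e2, Finset.sum_add_distrib, e4]
    simp [hF]
    ring
  exact_mod_cast hcount

end count

section ZD
open Polynomial

theorem frac_lemma {F : Type*} [Field F] [DecidableEq F] (S : Finset F) (e : F → ℕ) (P : F → F[X])
    (hP : ∀ c, (P c).degree < (e c : WithBot ℕ)) :
    ∃ N : F[X], N.degree = ((∑ c ∈ S, e c : ℕ) : WithBot ℕ) ∧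
      ∀ x, (∀ c ∈ S, x ≠ c) →
        N.eval x = (1 + ∑ c ∈ S, (P c).eval x / (x - c) ^ e c) * ∏ c ∈ S, (x - c) ^ e c := by
  induction S using Finset.induction_on with
  | empty => exact ⟨1, by simp, by simp⟩
  | insert c S hc ih =>
    obtain ⟨N, hN, hx⟩ := ih
    refine ⟨N * (X - C c) ^ e c + P c * ∏ d ∈ S, (X - C d) ^ e d, ?_, ?_⟩
    · have hd1 : (N * (X - C c) ^ e c).degree = ((∑ c ∈ insert c S, e c : ℕ) : WithBot ℕ) := by
        rw [degree_mul, hN, degree_pow, degree_X_sub_C, Finset.sum_insert hc]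
        push_cast
        rw [add_comm]; simp
      have hd2 : (∏ d ∈ S, (X - C d) ^ e d).degree = ((∑ c ∈ S, e c : ℕ) : WithBot ℕ) := by
        rw [degree_prod]
        simp
      rw [degree_add_eq_left_of_degree_lt, hd1]
      rw [hd1, degree_mul, hd2, Finset.sum_insert hc]
      push_cast
      exact WithBot.add_lt_add_right (by exact_mod_cast WithBot.coe_ne_bot) (hP c)
    · intro x hxc
      have h1 : x - c ≠ 0 := sub_ne_zero.mpr (hxc c (Finset.mem_insert_self _ _))
      have h2 := hx x (fun d hd => hxc d (Finset.mem_insert_of_mem hd))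
      rw [Finset.sum_insert hc, Finset.prod_insert hc]
      simp only [eval_add, eval_mul, eval_pow, eval_sub, eval_X, eval_C, eval_prod, h2]
      field_simp
      ring

universe u

theorem exists_ZD {F : Type u} [Field F] [DecidableEq F] {a w : F} {A : Type u}
    [AddCommGroup A] [DecidableEq A] {xc yc : A → F} {om : A →+ A}
    (E : EC a w xc yc om) (h2 : (2 : F) ≠ 0) (h3 : (3 : F) ≠ 0) (ha : a ≠ 0)
    (hw : w ^ 2 + w + 1 = 0) (H : AddSubgroup A) (HS : Finset A) (hHS : ∀ T, T ∈ HS ↔ T ∈ H)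
    (hom : ∀ T ∈ H, om T ∈ H) :
    ∃ DA DB ZA ZB : F[X], InL (3 * HS.card - 3) DA DB ∧ InL (3 * HS.card) ZA ZB ∧
      (∀ ζ : F, ¬ (ZA + (-ζ) • DA = 0 ∧ ZB + (-ζ) • DB = 0)) ∧
      ∀ P, P ∉ H → DA.eval (xc P) + yc P * DB.eval (xc P) ≠ 0 ∧
        ZA.eval (xc P) + yc P * ZB.eval (xc P) =
          (∑ T ∈ HS, yc (P + T)) * (DA.eval (xc P) + yc P * DB.eval (xc P)) := by
  classical
  have hw3 : w ^ 3 = 1 := by linear_combination (w - 1) * hw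
  have h0 : (0 : A) ∈ HS := (hHS 0).mpr H.zero_mem
  set S := (HS.erase 0).image xc with hS
  let e : F → ℕ := fun c => if c ^ 3 + a = 0 then 2 else 3
  let Pc : F → F[X] := fun c => if c ^ 3 + a = 0 then C (-3 * c ^ 2) else
    C (-2 * (3 * c ^ 2)) * X + C (-2 * (c ^ 3 + 4 * a))
  have hPc : ∀ c, (Pc c).degree < (e c : WithBot ℕ) := by
    intro c
    simp only [Pc, e]
    split_ifs
    · exact lt_of_le_of_lt degree_C_le (by norm_num)
    · exact lt_of_le_of_lt degree_linear_le (by norm_num)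
  obtain ⟨N, hN, hNe⟩ := frac_lemma S e Pc hPc
  have hmem : ∀ T ∈ HS.erase 0, T ≠ 0 ∧ T ∈ H := fun T hT =>
    ⟨Finset.ne_of_mem_erase hT, (hHS T).mp (Finset.mem_of_mem_erase hT)⟩
  have hself : ∀ T, T ≠ 0 → (xc T ^ 3 + a = 0 ↔ -T = T) := by
    intro T hT
    rw [← E.eqn T hT]
    constructor
    · intro h
      have hy : yc T = 0 := by simpa using h
      exact E.ext _ _ (neg_ne_zero.mpr hT) hT (E.xneg T) (by rw [E.yneg, hy, neg_zero])
    · intro h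
      have := E.yneg T
      rw [h] at this
      have : 2 * yc T = 0 := by linear_combination this
      rcases mul_eq_zero.mp this with h | h
      · exact absurd h h2
      · rw [h]; simp
  have hfib : ∀ T ∈ HS.erase 0, (HS.erase 0).filter (fun T' => xc T' = xc T) = {T, -T} := by
    intro T hT
    obtain ⟨hT0, hTH⟩ := hmem T hT
    ext T'
    simp only [Finset.mem_filter, Finset.mem_insert, Finset.mem_singleton]
    constructor
    · rintro ⟨hT', hx⟩
      exact E.inj _ _ (hmem T' hT').1 hT0 hx
    · rintro (rfl | rfl)
      · exact ⟨hT, rfl⟩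
      · refine ⟨Finset.mem_erase.mpr ⟨neg_ne_zero.mpr hT0, (hHS _).mpr (H.neg_mem hTH)⟩, E.xneg T⟩
  have hxne : ∀ P, P ∉ H → ∀ c ∈ S, xc P ≠ c := by
    intro P hP c hc hx
    obtain ⟨T, hT, rfl⟩ := Finset.mem_image.mp hc
    obtain ⟨hT0, hTH⟩ := hmem T hT
    have hP0 : P ≠ 0 := by rintro rfl; exact hP H.zero_mem
    rcases E.inj _ _ hP0 hT0 hx with rfl | rfl
    · exact hP hTH
    · exact hP (H.neg_mem hTH)
  have hz : ∀ P, P ∉ H → ∑ T ∈ HS, yc (P + T) =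
      yc P * (1 + ∑ c ∈ S, (Pc c).eval (xc P) / (xc P - c) ^ e c) := by
    intro P hP
    have hP0 : P ≠ 0 := by rintro rfl; exact hP H.zero_mem
    rw [← Finset.add_sum_erase HS _ h0, add_zero, mul_add, mul_one]
    congr 1
    rw [← Finset.sum_fiberwise_of_maps_to (t := S) (g := xc)
      (fun T hT => Finset.mem_image_of_mem xc hT), Finset.mul_sum]
    apply Finset.sum_congr rfl
    intro c hc
    have hxc := hxne P hP c hc
    obtain ⟨T, hT, rfl⟩ := Finset.mem_image.mp hc
    obtain ⟨hT0, hTH⟩ := hmem T hT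
    rw [hfib T hT]
    have hya := E.yadd P T hP0 hT0 hxc
    have hd : xc P - xc T ≠ 0 := sub_ne_zero.mpr hxc
    by_cases h22 : xc T ^ 3 + a = 0
    · have hneg := (hself T hT0).mp h22
      rw [hneg]
      simp only [Finset.insert_eq_of_mem, Finset.mem_singleton, Finset.sum_singleton, Pc, e, h22,
        if_true, eval_C]
      rw [sub_eq_add_neg, hneg] at hya
      apply mul_left_cancel₀ h2
      rw [two_mul, hya]
      have : a = - xc T ^ 3 := by linear_combination h22
      rw [this]
      field_simp
      ring
    · have hneg : T ≠ -T := fun h => h22 ((hself T hT0).mpr h.symm)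
      rw [Finset.sum_pair hneg, ← sub_eq_add_neg, hya]
      simp only [Pc, e, h22, if_false, eval_add, eval_mul, eval_C, eval_X]
      field_simp
      ring
  have hcard : HS.card = 1 + ∑ c ∈ S, (if c ^ 3 + a = 0 then 1 else 2) := by
    rw [← Finset.card_erase_add_one h0, add_comm]
    congr 1
    rw [Finset.card_eq_sum_card_fiberwise (t := S) (f := xc)
      (fun T hT => Finset.mem_image_of_mem xc hT)]
    apply Finset.sum_congr rfl
    intro c hc
    obtain ⟨T, hT, rfl⟩ := Finset.mem_image.mp hc
    rw [hfib T hT]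
    obtain ⟨hT0, hTH⟩ := hmem T hT
    split_ifs with h22
    · rw [(hself T hT0).mp h22]; simp
    · rw [Finset.card_pair]
      exact fun h => h22 ((hself T hT0).mpr h.symm)
  have hN0 : N ≠ 0 := by
    rintro rfl
    rw [degree_zero] at hN
    exact absurd hN.symm (WithBot.natCast_ne_bot _)
  have hNd : N.natDegree = ∑ c ∈ S, e c := natDegree_eq_of_degree_eq_some hN
  by_cases htor : ∃ T ∈ H, T ≠ 0 ∧ -T = T
  · obtain ⟨T, hTH, hT0, hT2⟩ := htor
    have he := (hself T hT0).mpr hT2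
    set c0 := xc T with hc0
    have hc00 : c0 ≠ 0 := by intro h; apply ha; rw [h] at he; linear_combination he
    have hsplit : ∀ x, x ^ 3 + a = 0 ↔ x = c0 ∨ x = w * c0 ∨ x = w * (w * c0) := by
      intro x
      have : x ^ 3 + a = (x - c0) * ((x - w * c0) * (x - w * (w * c0))) := by
        linear_combination he + (c0 * x ^ 2 - w * c0 ^ 2 * x + (w - 1) * c0 ^ 3) * hw
      rw [this]
      simp only [mul_eq_zero, sub_eq_zero]
    have hTo : om T ∈ HS.erase 0 := Finset.mem_erase.mpr ⟨E.om0 _ hT0, (hHS _).mpr (hom _ hTH)⟩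
    have hToo : om (om T) ∈ HS.erase 0 :=
      Finset.mem_erase.mpr ⟨E.om0 _ (E.om0 _ hT0), (hHS _).mpr (hom _ (hom _ hTH))⟩
    have hE : S.filter (fun c => c ^ 3 + a = 0) = {c0, w * c0, w * (w * c0)} := by
      ext x
      simp only [Finset.mem_filter, hsplit, Finset.mem_insert, Finset.mem_singleton]
      constructor
      · exact fun h => h.2
      · intro h
        refine ⟨?_, h⟩
        rcases h with rfl | rfl | rfl
        · exact Finset.mem_image_of_mem xc (Finset.mem_erase.mpr ⟨hT0, (hHS _).mpr hTH⟩)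
        · rw [hc0, ← E.xom]; exact Finset.mem_image_of_mem xc hTo
        · rw [hc0, ← E.xom, ← E.xom]; exact Finset.mem_image_of_mem xc hToo
    have hw1 : w ≠ 1 := by rintro rfl; apply h3; linear_combination hw
    have hw0 : w ≠ 0 := by rintro rfl; simp at hw
    have d1 : c0 ≠ w * c0 := by
      intro h; apply hw1; apply mul_right_cancel₀ hc00; rw [← h, one_mul]
    have d2 : w * c0 ≠ w * (w * c0) := by
      intro h; exact d1 (mul_left_cancel₀ hw0 h)
    have d3 : c0 ≠ w * (w * c0) := by
      intro h; apply d1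
      linear_combination -w * h - c0 * hw3
    have hEc : (S.filter (fun c => c ^ 3 + a = 0)).card = 3 := by
      rw [hE, Finset.card_eq_three]; exact ⟨_, _, _, d1, d3, d2, rfl⟩
    set S' := S.filter (fun c => ¬ c ^ 3 + a = 0) with hS'
    have hcard' : HS.card = 4 + 2 * S'.card := by
      rw [hcard, ← Finset.sum_filter_add_sum_filter_not S (fun c => c ^ 3 + a = 0)]
      rw [Finset.sum_congr rfl (g := fun _ => 1), Finset.sum_congr (s₁ := S.filter (fun c => ¬ c ^ 3 + a = 0)) rfl (g := fun _ => 2)]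
      · simp [hEc]; ring
      · intro c hc; rw [if_neg (Finset.mem_filter.mp hc).2]
      · intro c hc; rw [if_pos (Finset.mem_filter.mp hc).2]
    have hdeg : N.natDegree = 6 + 3 * S'.card := by
      rw [hNd, ← Finset.sum_filter_add_sum_filter_not S (fun c => c ^ 3 + a = 0)]
      rw [Finset.sum_congr rfl (g := fun _ => 2), Finset.sum_congr (s₁ := S.filter (fun c => ¬ c ^ 3 + a = 0)) rfl (g := fun _ => 3)]
      · simp [hEc]; ring
      · intro c hc; exact if_neg (Finset.mem_filter.mp hc).2
      · intro c hc; exact if_pos (Finset.mem_filter.mp hc).2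
    let R : F[X] := ∏ c ∈ S', (X - C c) ^ 3
    have hRd : R.natDegree = 3 * S'.card := by
      rw [natDegree_prod_of_monic _ _ (fun c _ => (monic_X_sub_C c).pow 3)]
      simp [mul_comm]
    refine ⟨0, R * (X ^ 3 + C a), N, 0, ?_, ?_, ?_, ?_⟩
    · refine ⟨by simp, Or.inr ?_⟩
      have := natDegree_mul_le (p := R) (q := X ^ 3 + C a)
      rw [cubic_natDegree, hRd] at this
      omega
    · exact ⟨by omega, Or.inl rfl⟩
    · rintro ζ ⟨h, -⟩
      apply hN0; simpa using h
    · intro P hP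
      have hP0 : P ≠ 0 := by rintro rfl; exact hP H.zero_mem
      have hx := hxne P hP
      have hprod : ∏ c ∈ S, (xc P - c) ^ e c = R.eval (xc P) * (xc P ^ 3 + a) ^ 2 := by
        rw [← Finset.prod_filter_mul_prod_filter_not S (fun c => c ^ 3 + a = 0), mul_comm]
        congr 1
        · simp only [R, eval_prod, eval_pow, eval_sub, eval_X, eval_C]
          apply Finset.prod_congr rfl
          intro c hc
          rw [show e c = 3 from if_neg (Finset.mem_filter.mp hc).2]
        · rw [Finset.prod_congr rfl (g := fun c => (xc P - c) ^ 2)]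
          · rw [Finset.prod_pow, hE, Finset.prod_insert, Finset.prod_pair d2]
            · congr 1
              linear_combination - he - (c0 * xc P ^ 2 - w * c0 ^ 2 * xc P + (w - 1) * c0 ^ 3) * hw
            · simp [d1, d3]
          · intro c hc
            rw [show e c = 2 from if_pos (Finset.mem_filter.mp hc).2]
      have hpne : ∏ c ∈ S, (xc P - c) ^ e c ≠ 0 := by
        rw [Finset.prod_ne_zero_iff]
        intro c hc
        exact pow_ne_zero _ (sub_ne_zero.mpr (hx c hc))
      rw [hprod] at hpne
      have hR0 : R.eval (xc P) ≠ 0 := left_ne_zero_of_mul hpne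
      have hc0' : xc P ^ 3 + a ≠ 0 := by
        intro h; apply hpne; rw [h]; simp
      have hy := E.eqn P hP0
      have hy0 : yc P ≠ 0 := by
        intro h; apply hc0'; rw [← hy, h]; simp
      simp only [eval_zero, zero_add, mul_zero, add_zero, eval_mul, eval_add, eval_pow, eval_X,
        eval_C]
      refine ⟨mul_ne_zero hy0 (mul_ne_zero hR0 hc0'), ?_⟩
      rw [hNe _ hx, hz P hP, hprod]
      rw [← hy]; ring
  · have hno : ∀ c ∈ S, ¬ c ^ 3 + a = 0 := by
      intro c hc h
      obtain ⟨T, hT, rfl⟩ := Finset.mem_image.mp hc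
      obtain ⟨hT0, hTH⟩ := hmem T hT
      exact htor ⟨T, hTH, hT0, (hself T hT0).mp h⟩
    have hcard' : HS.card = 1 + 2 * S.card := by
      rw [hcard, Finset.sum_congr rfl (g := fun _ => 2)]
      · simp [mul_comm]
      · intro c hc; rw [if_neg (hno c hc)]
    have hdeg : N.natDegree = 3 * S.card := by
      rw [hNd, Finset.sum_congr rfl (g := fun _ => 3)]
      · simp [mul_comm]
      · intro c hc; exact if_neg (hno c hc)
    let R : F[X] := ∏ c ∈ S, (X - C c) ^ e c
    have hRd : R.natDegree = 3 * S.card := by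
      rw [natDegree_prod_of_monic _ _ (fun c _ => (monic_X_sub_C c).pow _), ← hdeg, hNd]
      simp
    refine ⟨R, 0, 0, N, ?_, ?_, ?_, ?_⟩
    · exact ⟨by omega, Or.inl rfl⟩
    · exact ⟨by simp, Or.inr (by omega)⟩
    · rintro ζ ⟨-, h⟩
      apply hN0; simpa using h
    · intro P hP
      have hx := hxne P hP
      have hR : R.eval (xc P) = ∏ c ∈ S, (xc P - c) ^ e c := by
        simp only [R, eval_prod, eval_pow, eval_sub, eval_X, eval_C]
      simp only [eval_zero, mul_zero, add_zero, zero_add]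
      rw [hNe _ hx, hz P hP, hR]
      refine ⟨?_, by ring⟩
      rw [Finset.prod_ne_zero_iff]
      intro c hc
      exact pow_ne_zero _ (sub_ne_zero.mpr (hx c hc))

end ZD

section codes
open Polynomial

theorem codes_of_points {F : Type*} [Field F] [DecidableEq F] {a : F} (h m t : ℕ) (hh : 1 ≤ h)
    (ht : 1 ≤ t) (htm : t < m) (DA DB ZA ZB : F[X]) (hDL : InL (3 * h - 3) DA DB)
    (hZL : InL (3 * h) ZA ZB)
    (hne : ∀ ζ : F, ¬ (ZA + (-ζ) • DA = 0 ∧ ZB + (-ζ) • DB = 0))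
    (ζ : Fin m → F) (hζ : Function.Injective ζ) (xs ys : Fin m × Fin (3 * h) → F)
    (hc : ∀ P, ys P ^ 2 = xs P ^ 3 + a) (hinj : Function.Injective fun P => (xs P, ys P))
    (hxi : ∀ i, Function.Injective fun j => xs (i, j))
    (hD0 : ∀ P, DA.eval (xs P) + ys P * DB.eval (xs P) ≠ 0)
    (hZD : ∀ P, ZA.eval (xs P) + ys P * ZB.eval (xs P) =
      ζ P.1 * (DA.eval (xs P) + ys P * DB.eval (xs P))) :
    ExistsOptimalLRC F (3 * h * m) ((3 * h - 2) * t + 1) (3 * h * (m - t)) (3 * h - 2) 3 ∧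
    ExistsOptimalLRC F (3 * h * m) (2 * t + 1) (3 * h * (m - t)) 2 (3 * h - 1) := by
  classical
  obtain ⟨D, hDdef⟩ : ∃ D : Fin m × Fin (3 * h) → F,
    D = fun P => DA.eval (xs P) + ys P * DB.eval (xs P) := ⟨_, rfl⟩
  obtain ⟨Z, hZdef⟩ : ∃ Z : Fin m × Fin (3 * h) → F,
    Z = fun P => ZA.eval (xs P) + ys P * ZB.eval (xs P) := ⟨_, rfl⟩
  have hDn : ∀ P, D P ≠ 0 := by rw [hDdef]; exact hD0
  have hZDP : ∀ P, Z P = ζ P.1 * D P := by rw [hDdef, hZdef]; exact hZD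
  have hDF : D ∈ Fn xs ys (3 * h - 3) := ⟨DA, DB, hDL, fun P => by rw [hDdef]⟩
  have hZF : Z ∈ Fn xs ys (3 * h) := ⟨ZA, ZB, hZL, fun P => by rw [hZdef]⟩
  have glob : ∀ U : Submodule F (Fin m × Fin (3 * h) → F), (∀ g ∈ U, g ∈ Fn xs ys (3 * h - 1)) →
      ∀ (c : F) (g : Fin t → (Fin m × Fin (3 * h) → F)), (∀ k, g k ∈ U) →
      (∃ P, c * (ζ P.1 ^ t * D P ^ t) + ∑ k : Fin t, ζ P.1 ^ (k : ℕ) * D P ^ (t - 1) * g k P ≠ 0) →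
      (Finset.univ.filter fun P : Fin m × Fin (3 * h) => c * (ζ P.1 ^ t * D P ^ t)
        + ∑ k : Fin t, ζ P.1 ^ (k : ℕ) * D P ^ (t - 1) * g k P = 0).card ≤ 3 * h * t := by
    intro U hU c g hg hex
    have hf : (c • Z ^ t + ∑ k : Fin t, Z ^ (k : ℕ) * D ^ (t - 1 - k) * g k) ∈
        Fn xs ys (3 * h * t) := by
      apply Submodule.add_mem
      · exact Submodule.smul_mem _ _ (Fn_pow hc hZF t)
      · apply Submodule.sum_mem
        intro k _
        refine Fn_mono ?_ (Fn_mul hc (Fn_mul hc (Fn_pow hc hZF k) (Fn_pow hc hDF (t - 1 - k)))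
          (hU _ (hg k)))
        have hk := k.2
        obtain ⟨j, hj⟩ : ∃ j, t = k + 1 + j := ⟨t - (k + 1), by omega⟩
        have hj2 : t - 1 - k = j := by omega
        rw [hj2]
        have h1 : (3 * h - 3) * j ≤ 3 * h * j := Nat.mul_le_mul_right _ (by omega)
        have h2 : 3 * h * t = 3 * h * k + 3 * h + 3 * h * j := by
          conv_lhs => rw [hj]
          ring
        omega
    have hfe : ∀ P, (c • Z ^ t + ∑ k : Fin t, Z ^ (k : ℕ) * D ^ (t - 1 - k) * g k) P =
        c * (ζ P.1 ^ t * D P ^ t) + ∑ k : Fin t, ζ P.1 ^ (k : ℕ) * D P ^ (t - 1) * g k P := by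
      intro P
      simp only [Pi.add_apply, Pi.smul_apply, Pi.pow_apply, Finset.sum_apply, Pi.mul_apply,
        smul_eq_mul, hZDP, mul_pow]
      congr 1
      apply Finset.sum_congr rfl
      intro k _
      have hk := k.2
      rw [mul_assoc (ζ P.1 ^ (k : ℕ)), ← pow_add]
      congr 3
      omega
    apply Fn_zero_count hc hinj hf
    · obtain ⟨P, hP⟩ := hex
      intro h0
      apply hP
      rw [← hfe, h0]; rfl
    · intro P hP
      rw [hfe]; exact (Finset.mem_filter.mp hP).2
  constructor
  · have hmain := code_exists m (3 * h) t (3 * h - 2) ht htm (by omega) (by omega) ζ hζ D hDn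
      (Fn xs ys (3 * h - 2)) (Fn_finrank hc hinj (by omega) (by
        simp only [Fintype.card_prod, Fintype.card_fin]
        have : 1 * (3 * h) ≤ m * (3 * h) := Nat.mul_le_mul_right _ (by omega)
        omega)) (Fn_mono (by omega) hDF) ?_ (glob _ (fun g hg => Fn_mono (by omega) hg))
    · rwa [show 3 * h + 1 - (3 * h - 2) = 3 by omega] at hmain
    · rintro g ⟨A, B, hAB, hg⟩ hg0 i
      by_contra hcon
      push Not at hcon
      have hpi : Function.Injective (fun j => (xs (i, j), ys (i, j))) := by
        intro j j' hj
        exact hxi i (Prod.ext_iff.mp hj).1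
      refine local_two (a := a) (w := 3 * h) (by omega) hAB (hZL.add ((hDL.mono (by omega)).smul (-ζ i)))
        ?_ (hne (ζ i)) (Finset.univ.image (fun j => (xs (i, j), ys (i, j))))
        ((Finset.univ.filter fun j => g (i, j) = 0).image (fun j => (xs (i, j), ys (i, j))))
        (Finset.image_subset_image (Finset.filter_subset _ _)) ?_ ?_ ?_ ?_ ?_
      · rintro ⟨rfl, rfl⟩
        apply hg0; funext P; rw [hg]; simp
      · rw [Finset.card_image_of_injective _ hpi]; simp
      · rw [Finset.card_image_of_injective _ hpi]; exact hcon
      · intro P hP Q hQ hPQ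
        simp only [Finset.coe_image, Finset.coe_univ, Set.image_univ, Set.mem_range] at hP hQ
        obtain ⟨j, rfl⟩ := hP
        obtain ⟨j', rfl⟩ := hQ
        have := hxi i hPQ
        rw [this]
      · intro P hP
        obtain ⟨j, -, rfl⟩ := Finset.mem_image.mp hP
        refine ⟨hc _, ?_⟩
        simp only [eval_add, eval_smul, smul_eq_mul]
        linear_combination hZD (i, j)
      · intro P hP
        obtain ⟨j, hj, rfl⟩ := Finset.mem_image.mp hP
        have := (Finset.mem_filter.mp hj).2
        rw [hg] at this
        exact this
  · let Φ : (F × F) →ₗ[F] (Fin m × Fin (3 * h) → F) :=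
      { toFun := fun x P => D P * (x.1 + x.2 * xs P)
        map_add' := fun x y => by funext P; simp; ring
        map_smul' := fun c x => by funext P; simp; ring }
    have hΦ : ∀ x P, Φ x P = D P * (x.1 + x.2 * xs P) := fun x P => rfl
    have hkey : ∀ (x : F × F) i j j', Φ x (i, j) = 0 → Φ x (i, j') = 0 → j ≠ j' → x = 0 := by
      intro x i j j' h1 h2 hj
      rw [hΦ] at h1 h2
      have e1 := (mul_eq_zero.mp h1).resolve_left (hDn _)
      have e2 := (mul_eq_zero.mp h2).resolve_left (hDn _)
      have hx : xs (i, j) - xs (i, j') ≠ 0 := sub_ne_zero.mpr (fun h => hj (hxi i h))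
      have e3 : x.2 * (xs (i, j) - xs (i, j')) = 0 := by linear_combination e1 - e2
      have e4 := (mul_eq_zero.mp e3).resolve_right hx
      rw [e4] at e1
      exact Prod.ext (by simpa using e1) e4
    have hΦi : Function.Injective Φ := by
      rw [injective_iff_map_eq_zero]
      intro x hx
      apply hkey x ⟨0, by omega⟩ ⟨0, by omega⟩ ⟨1, by omega⟩
      · rw [hx]; rfl
      · rw [hx]; rfl
      · simp
    have hmain := code_exists m (3 * h) t 2 ht htm (by omega) (by omega) ζ hζ D hDn
      (LinearMap.range Φ) (by rw [LinearMap.finrank_range_of_inj hΦi]; simp)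
      ⟨(1, 0), by funext P; simp [hΦ]⟩ ?_ (glob _ ?_)
    · exact hmain
    · rintro _ ⟨x, rfl⟩ hx0 i
      rw [Nat.lt_succ_iff, Finset.card_le_one]
      intro j hj j' hj'
      by_contra hjj
      have := hkey x i j j' (Finset.mem_filter.mp hj).2 (Finset.mem_filter.mp hj').2 hjj
      apply hx0; rw [this, map_zero]
    · rintro _ ⟨x, rfl⟩
      have hx1 : (fun P => x.1 + x.2 * xs P) ∈ Fn xs ys 2 := by
        refine ⟨C x.2 * X + C x.1, 0, ⟨?_, Or.inl rfl⟩, fun P => ?_⟩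
        · have := natDegree_linear_le (a := x.2) (b := x.1)
          omega
        · simp; ring
      have := Fn_mul hc hDF hx1
      rw [show 3 * h - 3 + 2 = 3 * h - 1 by omega] at this
      exact this

end codes

section fibers
open Polynomial
universe u

theorem card_preim {A : Type*} [AddCommGroup A] [Fintype A] [DecidableEq A] (f : A →+ A)
    (HS : Finset A) (k : ℕ) (hk : (Finset.univ.filter fun P => f P = 0).card ≤ k) :
    (Finset.univ.filter fun P => f P ∈ HS).card ≤ k * HS.card := by
  apply Finset.card_le_mul_card_image_of_maps_to (f := f)
  · intro P hP; exact (Finset.mem_filter.mp hP).2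
  · intro T _
    rcases Finset.eq_empty_or_nonempty
      ((Finset.univ.filter fun P => f P ∈ HS).filter fun P => f P = T) with he | ⟨P0, hP0⟩
    · rw [he]; simp
    · refine le_trans ?_ hk
      have h0 := (Finset.mem_filter.mp hP0).2
      apply Finset.card_le_card_of_injOn (fun Q => Q - P0)
      · intro Q hQ
        have h1 := (Finset.mem_filter.mp hQ).2
        simp [h0, h1]
      · intro Q _ Q' _ h
        exact sub_left_injective h

theorem even_card_neg {F : Type*} [Field F] [DecidableEq F] (h2 : (2 : F) ≠ 0) (V : Finset F)
    (h0 : (0 : F) ∉ V) (hn : ∀ v ∈ V, -v ∈ V) : Even V.card := by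
  have h : ∑ v ∈ V, (1 : ZMod 2) = 0 := by
    apply Finset.sum_involution (fun v _ => -v)
    · intro v hv; exact CharTwo.add_self_eq_zero 1
    · intro v hv _ he
      have : 2 * v = 0 := by linear_combination -he
      rcases mul_eq_zero.mp this with h | h
      · exact h2 h
      · rw [h] at hv; exact h0 hv
    · intro v hv; exact neg_neg v
    · intro v hv; exact hn v hv
  rw [Finset.sum_const, nsmul_eq_mul, mul_one, ZMod.natCast_eq_zero_iff] at h
  exact even_iff_two_dvd.mpr h

theorem ker_two {F : Type u} [Field F] [DecidableEq F] {a w : F} {A : Type u}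
    [AddCommGroup A] [Fintype A] [DecidableEq A] {xc yc : A → F} {om : A →+ A}
    (E : EC a w xc yc om) (h2 : (2 : F) ≠ 0) :
    (Finset.univ.filter fun P : A => P + P = 0).card ≤ 4 := by
  have hsub : (Finset.univ.filter fun P : A => P + P = 0) ⊆
      insert 0 (Finset.univ.filter fun P : A => P ≠ 0 ∧ yc P = 0) := by
    intro P hP
    have hP := (Finset.mem_filter.mp hP).2
    by_cases h0 : P = 0
    · simp [h0]
    · refine Finset.mem_insert_of_mem ?_
      simp only [Finset.mem_filter, Finset.mem_univ, true_and]
      refine ⟨h0, ?_⟩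
      have h1 : -P = P := neg_eq_of_add_eq_zero_left hP
      have h3 := E.yneg P
      rw [h1] at h3
      have : 2 * yc P = 0 := by linear_combination h3
      exact (mul_eq_zero.mp this).resolve_left h2
  refine (Finset.card_le_card hsub).trans ((Finset.card_insert_le _ _).trans ?_)
  have : (Finset.univ.filter fun P : A => P ≠ 0 ∧ yc P = 0).card ≤ 3 := by
    have hb : (X ^ 3 + C a : F[X]).roots.toFinset.card ≤ 3 :=
      (Multiset.toFinset_card_le _).trans ((card_roots' _).trans (cubic_natDegree a).le)
    refine le_trans ?_ hb
    apply Finset.card_le_card_of_injOn xc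
    · intro P hP
      simp only [Finset.coe_filter, Finset.mem_univ, true_and, Set.mem_setOf_eq] at hP
      simp only [Finset.mem_coe, Multiset.mem_toFinset]
      rw [mem_roots (cubic_ne a)]
      have := E.eqn P hP.1
      rw [hP.2] at this
      simp only [IsRoot, eval_add, eval_pow, eval_X, eval_C]
      rw [← this]; simp
    · intro P hP Q hQ hx
      simp only [Finset.coe_filter, Finset.mem_univ, true_and, Set.mem_setOf_eq] at hP hQ
      exact E.ext P Q hP.1 hQ.1 hx (by rw [hP.2, hQ.2])
  omega

theorem ker_om {F : Type u} [Field F] [DecidableEq F] {a w : F} {A : Type u}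
    [AddCommGroup A] [Fintype A] [DecidableEq A] {xc yc : A → F} {om : A →+ A}
    (E : EC a w xc yc om) (hw : w ≠ 1) :
    (Finset.univ.filter fun P : A => P - om P = 0).card ≤ 3 := by
  have hsub : (Finset.univ.filter fun P : A => P - om P = 0) ⊆
      insert 0 (Finset.univ.filter fun P : A => P ≠ 0 ∧ xc P = 0) := by
    intro P hP
    have hP := (Finset.mem_filter.mp hP).2
    by_cases h0 : P = 0
    · simp [h0]
    · refine Finset.mem_insert_of_mem ?_
      simp only [Finset.mem_filter, Finset.mem_univ, true_and]
      refine ⟨h0, ?_⟩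
      have h3 := E.xom P
      rw [← sub_eq_zero.mp hP] at h3
      have : (w - 1) * xc P = 0 := by linear_combination -h3
      exact (mul_eq_zero.mp this).resolve_left (sub_ne_zero.mpr hw)
  refine (Finset.card_le_card hsub).trans ((Finset.card_insert_le _ _).trans ?_)
  have hdeg : (X ^ 2 - C a : F[X]).natDegree = 2 := natDegree_X_pow_sub_C
  have hne : (X ^ 2 - C a : F[X]) ≠ 0 := by
    intro h; rw [h] at hdeg; simp at hdeg
  have : (Finset.univ.filter fun P : A => P ≠ 0 ∧ xc P = 0).card ≤ 2 := by
    have hb : (X ^ 2 - C a : F[X]).roots.toFinset.card ≤ 2 :=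
      (Multiset.toFinset_card_le _).trans ((card_roots' _).trans hdeg.le)
    refine le_trans ?_ hb
    apply Finset.card_le_card_of_injOn yc
    · intro P hP
      simp only [Finset.coe_filter, Finset.mem_univ, true_and, Set.mem_setOf_eq] at hP
      simp only [Finset.mem_coe, Multiset.mem_toFinset]
      rw [mem_roots hne]
      have := E.eqn P hP.1
      rw [hP.2] at this
      simp only [IsRoot, eval_sub, eval_pow, eval_X, eval_C]
      rw [this]; ring
    · intro P hP Q hQ hx
      simp only [Finset.coe_filter, Finset.mem_univ, true_and, Set.mem_setOf_eq] at hP hQ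
      exact E.ext P Q hP.1 hQ.1 (by rw [hP.2, hQ.2]) hx
  omega

theorem codes_of_EC {F : Type u} [Field F] [DecidableEq F] {a w : F} {A : Type u}
    [AddCommGroup A] [Fintype A] [DecidableEq A] {xc yc : A → F} {om : A →+ A}
    (E : EC a w xc yc om) (h2 : (2 : F) ≠ 0) (h3 : (3 : F) ≠ 0) (ha : a ≠ 0)
    (hw : w ^ 2 + w + 1 = 0) (H : AddSubgroup A) (HS : Finset A) (hHS : ∀ T, T ∈ HS ↔ T ∈ H)
    (hom : ∀ T ∈ H, om T ∈ H) (h t m : ℕ) (hh : HS.card = h) (ht : 1 ≤ t) (htm : t < m)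
    (hm : ∀ k : ℕ, Fintype.card A ≤ 7 * h + 6 * h * k → m ≤ 2 * k) :
    ExistsOptimalLRC F (3 * h * m) ((3 * h - 2) * t + 1) (3 * h * (m - t)) (3 * h - 2) 3 ∧
    ExistsOptimalLRC F (3 * h * m) (2 * t + 1) (3 * h * (m - t)) 2 (3 * h - 1) := by
  classical
  have hw1 : w ≠ 1 := by rintro rfl; apply h3; linear_combination hw
  have h0S : (0 : A) ∈ HS := (hHS 0).mpr H.zero_mem
  have hh1 : 1 ≤ h := by rw [← hh]; exact Finset.card_pos.mpr ⟨0, h0S⟩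
  obtain ⟨DA, DB, ZA, ZB, hDL, hZL, hne, hZD⟩ := exists_ZD E h2 h3 ha hw H HS hHS hom
  rw [hh] at hDL hZL
  set z : A → F := fun P => ∑ T ∈ HS, yc (P + T) with hz
  -- om facts
  have hom3 : ∀ P, om (om (om P)) = P := by
    intro P
    have e1 := E.trace P
    have e2 := E.trace (om P)
    have : om (om (om P)) - P = 0 := by
      calc om (om (om P)) - P = (om P + om (om P) + om (om (om P))) - (P + om P + om (om P)) := by abel
        _ = 0 := by rw [e1, e2, sub_zero]
    exact sub_eq_zero.mp this
  have homH : ∀ P, om P ∈ H → P ∈ H := by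
    intro P hP; rw [← hom3 P]; exact hom _ (hom _ hP)
  have zT : ∀ P, ∀ T ∈ H, z (P + T) = z P := by
    intro P T hT
    apply Finset.sum_bij (fun S _ => T + S)
    · intro S hS; exact (hHS _).mpr (H.add_mem hT ((hHS S).mp hS))
    · intro S _ S' _ h; exact add_left_cancel h
    · intro S hS
      exact ⟨-T + S, (hHS _).mpr (H.add_mem (H.neg_mem hT) ((hHS S).mp hS)), by abel⟩
    · intro S _; rw [add_assoc]
  have zom : ∀ P, z (om P) = z P := by
    intro P
    symm
    apply Finset.sum_bij (fun S _ => om S)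
    · intro S hS; exact (hHS _).mpr (hom _ ((hHS S).mp hS))
    · intro S _ S' _ h; rw [← hom3 S, h, hom3]
    · intro S hS
      exact ⟨om (om S), (hHS _).mpr (hom _ (hom _ ((hHS S).mp hS))), hom3 S⟩
    · intro S _; rw [← map_add, E.yom]
  have zneg : ∀ P, z (-P) = - z P := by
    intro P
    rw [hz]
    simp only
    rw [← Finset.sum_neg_distrib]
    apply Finset.sum_bij (fun S _ => -S)
    · intro S hS; exact (hHS _).mpr (H.neg_mem ((hHS S).mp hS))
    · intro S _ S' _ h; exact neg_injective h
    · intro S hS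
      exact ⟨-S, (hHS _).mpr (H.neg_mem ((hHS S).mp hS)), neg_neg S⟩
    · intro S _; rw [← E.yneg]; congr 1; abel
  -- fibers
  let fib : F → Finset A := fun v => Finset.univ.filter fun Q => Q ∉ H ∧ z Q = v
  have memfib : ∀ v Q, Q ∈ fib v ↔ Q ∉ H ∧ z Q = v := by
    intro v Q; simp [fib]
  have fib_le : ∀ v, (fib v).card ≤ 3 * h := by
    intro v
    have hinj : Set.InjOn (fun Q => (xc Q, yc Q)) (fib v : Set A) := by
      intro P hP Q hQ hPQ
      have hP := ((memfib v P).mp hP).1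
      have hQ := ((memfib v Q).mp hQ).1
      exact E.ext P Q (by rintro rfl; exact hP H.zero_mem) (by rintro rfl; exact hQ H.zero_mem)
        (Prod.ext_iff.mp hPQ).1 (Prod.ext_iff.mp hPQ).2
    rw [← Finset.card_image_of_injOn hinj]
    apply zero_count (a := a) (hZL.add ((hDL.mono (by omega)).smul (-v))) (hne v)
    intro R hR
    obtain ⟨Q, hQ, rfl⟩ := Finset.mem_image.mp hR
    obtain ⟨hQH, hQz⟩ := (memfib v Q).mp hQ
    refine ⟨E.eqn Q (by rintro rfl; exact hQH H.zero_mem), ?_⟩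
    have := (hZD Q hQH).2
    change _ = z Q * _ at this
    rw [hQz] at this
    simp only [eval_add, eval_smul, smul_eq_mul]
    linear_combination this
  let good : Finset A := Finset.univ.filter fun P => P + P ∉ H ∧ P - om P ∉ H
  have memgood : ∀ P, P ∈ good ↔ P + P ∉ H ∧ P - om P ∉ H := by
    intro P; simp [good]
  have goodH : ∀ P ∈ good, P ∉ H := by
    intro P hP hPH
    exact ((memgood P).mp hP).1 (H.add_mem hPH hPH)
  have ucard : ∀ P ∈ good, ((HS.image (fun T => P + T) ∪ HS.image (fun T => om P + T)) ∪
        HS.image (fun T => om (om P) + T)).card = 3 * h := by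
    intro P hP
    obtain ⟨hg1, hg2⟩ := (memgood P).mp hP
    have disj : ∀ R R', R - R' ∉ H →
        Disjoint (HS.image (fun T => R + T)) (HS.image (fun T => R' + T)) := by
      intro R R' hRR
      rw [Finset.disjoint_left]
      intro Q hQ hQ'
      obtain ⟨T, hT, rfl⟩ := Finset.mem_image.mp hQ
      obtain ⟨T', hT', he⟩ := Finset.mem_image.mp hQ'
      apply hRR
      have : R - R' = T' - T := by
        have he : R' + T' = R + T := he
        rw [sub_eq_sub_iff_add_eq_add, ← he, add_comm]
      rw [this]
      exact H.sub_mem ((hHS _).mp hT') ((hHS _).mp hT)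
    have cimg : ∀ R : A, (HS.image (fun T => R + T)).card = h := by
      intro R
      rw [Finset.card_image_of_injective _ (add_right_injective R), hh]
    have d1 := disj P (om P) hg2
    have d2 : om P - om (om P) ∉ H := by
      rw [← map_sub]; exact fun hc => hg2 (homH _ hc)
    have d3 : P - om (om P) ∉ H := by
      intro hc
      have := H.neg_mem (hom _ hc)
      rw [map_sub, hom3, neg_sub] at this
      exact hg2 this
    rw [Finset.card_union_of_disjoint, Finset.card_union_of_disjoint d1, cimg, cimg, cimg]
    · omega
    · rw [Finset.disjoint_union_left]
      exact ⟨disj _ _ d3, disj _ _ d2⟩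
  have coset : ∀ P ∈ good, fib (z P) =
      (HS.image (fun T => P + T) ∪ HS.image (fun T => om P + T)) ∪
        HS.image (fun T => om (om P) + T) := by
    intro P hP
    have hPH := goodH P hP
    obtain ⟨hg1, hg2⟩ := (memgood P).mp hP
    symm
    apply Finset.eq_of_subset_of_card_le
    · intro Q hQ
      rw [memfib]
      have key : ∀ R, R ∉ H → z R = z P → Q ∈ HS.image (fun T => R + T) → Q ∉ H ∧ z Q = z P := by
        intro R hR hzR hQ
        obtain ⟨T, hT, rfl⟩ := Finset.mem_image.mp hQ
        have hT := (hHS T).mp hT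
        refine ⟨fun hc => hR ?_, by rw [zT _ _ hT, hzR]⟩
        have := H.sub_mem hc hT
        simpa using this
      have hoP : om P ∉ H := fun hc => hPH (homH _ hc)
      have hooP : om (om P) ∉ H := fun hc => hoP (homH _ hc)
      rcases Finset.mem_union.mp hQ with hQ | hQ
      · rcases Finset.mem_union.mp hQ with hQ | hQ
        · exact key _ hPH rfl hQ
        · exact key _ hoP (zom P) hQ
      · exact key _ hooP (by rw [zom, zom]) hQ
    · exact (fib_le _).trans (ucard P hP).ge
  have fib_eq : ∀ P ∈ good, (fib (z P)).card = 3 * h := by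
    intro P hP; rw [coset P hP, ucard P hP]
  have zne : ∀ P ∈ good, z P ≠ 0 := by
    intro P hP hzP
    have hPH := goodH P hP
    obtain ⟨hg1, hg2⟩ := (memgood P).mp hP
    have hmem : -P ∈ fib (z P) := by
      rw [memfib]
      exact ⟨fun hc => hPH (by simpa using H.neg_mem hc), by rw [zneg, hzP, neg_zero]⟩
    rw [coset P hP] at hmem
    have key : ∀ R, -P ∈ HS.image (fun T => R + T) → R + P ∈ H := by
      intro R hR
      obtain ⟨T, hT, he⟩ := Finset.mem_image.mp hR
      have he : R + T = -P := he
      have : R + P = -T := by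
        rw [eq_neg_iff_add_eq_zero, add_right_comm, he, neg_add_cancel]
      rw [this]; exact H.neg_mem ((hHS _).mp hT)
    rcases Finset.mem_union.mp hmem with hQ | hQ
    · rcases Finset.mem_union.mp hQ with hQ | hQ
      · exact hg1 (key _ hQ)
      · have h5 := key _ hQ
        apply hPH; apply homH; apply homH
        have : om (om P) = -(om P + P) := by
          rw [eq_neg_iff_add_eq_zero, ← E.trace P]; abel
        rw [this]; exact H.neg_mem h5
    · have h5 := key _ hQ
      apply hPH; apply homH
      have : om P = -(om (om P) + P) := by
        rw [eq_neg_iff_add_eq_zero, ← E.trace P]; abel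
      rw [this]; exact H.neg_mem h5
  let V : Finset F := good.image z
  have hV0 : (0 : F) ∉ V := by
    intro hc
    obtain ⟨P, hP, h0⟩ := Finset.mem_image.mp hc
    exact zne P hP h0
  have hVn : ∀ v ∈ V, -v ∈ V := by
    intro v hv
    obtain ⟨P, hP, rfl⟩ := Finset.mem_image.mp hv
    refine Finset.mem_image.mpr ⟨-P, ?_, zneg P⟩
    obtain ⟨hg1, hg2⟩ := (memgood P).mp hP
    rw [memgood]
    refine ⟨fun hc => hg1 ?_, fun hc => hg2 ?_⟩
    · have := H.neg_mem hc
      rwa [show -(-P + -P) = P + P by abel] at this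
    · have := H.neg_mem hc
      rwa [map_neg, show -(-P - -om P) = P - om P by abel] at this
  obtain ⟨k, hk⟩ := even_card_neg h2 V hV0 hVn
  have hgoodcard : good.card ≤ 3 * h * V.card := by
    apply Finset.card_le_mul_card_image_of_maps_to (f := z)
    · intro P hP; exact Finset.mem_image_of_mem z hP
    · intro v _
      refine le_trans (Finset.card_le_card ?_) (fib_le v)
      intro P hP
      obtain ⟨hP1, hP2⟩ := Finset.mem_filter.mp hP
      exact (memfib v P).mpr ⟨goodH P hP1, hP2⟩
  have hcard : Fintype.card A ≤ 7 * h + good.card := by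
    have b1 := card_preim ((AddMonoidHom.id A) + (AddMonoidHom.id A)) HS 4 (ker_two E h2)
    have b2 := card_preim ((AddMonoidHom.id A) - om) HS 3 (ker_om E hw1)
    have hsub : (Finset.univ : Finset A) ⊆
        ((Finset.univ.filter fun P => ((AddMonoidHom.id A) + (AddMonoidHom.id A)) P ∈ HS) ∪
        (Finset.univ.filter fun P => ((AddMonoidHom.id A) - om) P ∈ HS)) ∪ good := by
      intro P _
      by_cases hP : P ∈ good
      · exact Finset.mem_union_right _ hP
      · apply Finset.mem_union_left
        rw [memgood] at hP
        simp only [Finset.mem_union, Finset.mem_filter, Finset.mem_univ, true_and,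
          AddMonoidHom.add_apply, AddMonoidHom.sub_apply, AddMonoidHom.id_apply, hHS]
        tauto
    have c1 := Finset.card_le_card hsub
    have c2 := Finset.card_union_le ((Finset.univ.filter fun P => ((AddMonoidHom.id A) + (AddMonoidHom.id A)) P ∈ HS) ∪
        (Finset.univ.filter fun P => ((AddMonoidHom.id A) - om) P ∈ HS)) good
    have c3 := Finset.card_union_le (Finset.univ.filter fun P => ((AddMonoidHom.id A) + (AddMonoidHom.id A)) P ∈ HS)
        (Finset.univ.filter fun P => ((AddMonoidHom.id A) - om) P ∈ HS)
    rw [Finset.card_univ] at c1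
    rw [hh] at b1 b2
    omega
  have hmV : m ≤ V.card := by
    rw [hk, ← two_mul]
    apply hm
    rw [hk] at hgoodcard
    have : 3 * h * (k + k) = 6 * h * k := by ring
    omega
  let ζ : Fin m → F := fun i => (V.equivFin.symm (Fin.castLE hmV i)).1
  have hζV : ∀ i, ζ i ∈ V := fun i => (V.equivFin.symm (Fin.castLE hmV i)).2
  have hζ : Function.Injective ζ := by
    intro i j hij
    have := V.equivFin.symm.injective (Subtype.ext hij)
    exact Fin.castLE_injective hmV this
  have hζ0 : ∀ i, ζ i ≠ 0 := fun i hi => hV0 (hi ▸ hζV i)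
  have hfc : ∀ i, (fib (ζ i)).card = 3 * h := by
    intro i
    obtain ⟨P, hP, hPz⟩ := Finset.mem_image.mp (hζV i)
    rw [← hPz]; exact fib_eq P hP
  let Pt : Fin m × Fin (3 * h) → A := fun x => ((fib (ζ x.1)).equivFinOfCardEq (hfc x.1)).symm x.2
  have hPt : ∀ x, Pt x ∈ fib (ζ x.1) := fun x =>
    (((fib (ζ x.1)).equivFinOfCardEq (hfc x.1)).symm x.2).2
  have hPtH : ∀ x, Pt x ∉ H := fun x => ((memfib _ _).mp (hPt x)).1
  have hPtz : ∀ x, z (Pt x) = ζ x.1 := fun x => ((memfib _ _).mp (hPt x)).2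
  have hPt0 : ∀ x, Pt x ≠ 0 := fun x hx => hPtH x (hx ▸ H.zero_mem)
  have hPtj : ∀ i, Function.Injective (fun j => Pt (i, j)) := by
    intro i j j' hj
    exact ((fib (ζ i)).equivFinOfCardEq (hfc i)).symm.injective (Subtype.ext hj)
  have hPti : Function.Injective Pt := by
    rintro ⟨i, j⟩ ⟨i', j'⟩ he
    have h1 : i = i' := by
      apply hζ
      have h5 := hPtz (i, j)
      have h6 := hPtz (i', j')
      rw [← h5, ← h6, he]
    subst h1
    rw [hPtj i he]
  refine codes_of_points (a := a) h m t hh1 ht htm DA DB ZA ZB hDL hZL hne ζ hζ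
    (fun x => xc (Pt x)) (fun x => yc (Pt x)) (fun x => E.eqn _ (hPt0 x)) ?_ ?_ ?_ ?_
  · intro x y hxy
    exact hPti (E.ext _ _ (hPt0 x) (hPt0 y) (Prod.ext_iff.mp hxy).1 (Prod.ext_iff.mp hxy).2)
  · intro i j j' hj
    rcases E.inj _ _ (hPt0 (i, j)) (hPt0 (i, j')) hj with he | he
    · exact hPtj i he
    · exfalso
      have h5 := hPtz (i, j)
      rw [he, zneg, hPtz] at h5
      have : 2 * ζ i = 0 := by
        have h5 : - ζ i = ζ i := h5
        linear_combination -h5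
      exact (mul_ne_zero h2 (hζ0 i)) this
  · intro x; exact (hZD _ (hPtH x)).1
  · intro x
    have := (hZD _ (hPtH x)).2
    change _ = z (Pt x) * _ at this
    rw [hPtz] at this
    exact this

end fibers

theorem char_facts (p : ℕ) (hp : p.Prime) (hp5 : 5 ≤ p) (s : ℕ) (F : Type*) [Field F]
    [Fintype F] (hF : Fintype.card F = p ^ (2 * s)) :
    (2 : F) ≠ 0 ∧ (3 : F) ≠ 0 ∧ ringChar F ≠ 2 := by
  have hp0 : (p : F) = 0 := by
    have h := Nat.cast_card_eq_zero F
    rw [hF, Nat.cast_pow] at h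
    exact Classical.by_contradiction fun hne => pow_ne_zero _ hne h
  have key : ringChar F = p := by
    rcases (Nat.dvd_prime hp).mp ((ringChar.spec F p).mp hp0) with h | h
    · exact absurd h CharP.ringChar_ne_one
    · exact h
  have ne : ∀ n : ℕ, 0 < n → n < 5 → (n : F) ≠ 0 := by
    intro n hn hn5 hc
    have h := (ringChar.spec F n).mp hc
    rw [key] at h
    have := Nat.le_of_dvd hn h
    omega
  exact ⟨by exact_mod_cast ne 2 (by omega) (by omega), by exact_mod_cast ne 3 (by omega) (by omega),
    by omega⟩

theorem exists_w (p : ℕ) (hp3 : p % 3 = 2) (s : ℕ) (F : Type*) [Field F]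
    [Fintype F] (hF : Fintype.card F = p ^ (2 * s)) : ∃ w : F, w ^ 2 + w + 1 = 0 := by
  classical
  have h1 : p ^ (2 * s) % 3 = 1 := by
    rw [pow_mul, Nat.pow_mod, Nat.pow_mod p, hp3]
    simp
  have h2 : 3 ∣ Fintype.card Fˣ := by
    rw [Fintype.card_units, hF]; omega
  haveI : Fact (Nat.Prime 3) := ⟨Nat.prime_three⟩
  obtain ⟨u, hu⟩ := exists_prime_orderOf_dvd_card 3 h2
  have h3 : (u : F) ^ 3 = 1 := by
    have := pow_orderOf_eq_one u
    rw [hu] at this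
    rw [← Units.val_pow_eq_pow_val, this, Units.val_one]
  have h4 : (u : F) ≠ 1 := by
    intro hc
    have : u = 1 := Units.ext hc
    rw [this, orderOf_one] at hu
    omega
  refine ⟨u, ?_⟩
  have : ((u : F) - 1) * ((u : F) ^ 2 + u + 1) = 0 := by linear_combination h3
  exact (mul_eq_zero.mp this).resolve_left (sub_ne_zero.mpr h4)

/-- For an odd prime `p ≡ 2 (mod 3)`, `q = p^(2s)`, `h₀` a positive
divisor of `p^s + 1`, and `h = h₀²`, for all `1 ≤ t < m ≤ 2⌈(q + 2p^s + 1 - 8h)/(6h)⌉`,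
there exist an optimal `(3h-2, 3)`-LRC with parameters `[3hm, (3h-2)t + 1, 3h(m-t)]_q`
and an optimal `(2, 3h-1)`-LRC with parameters `[3hm, 2t + 1, 3h(m-t)]_q`. -/
theorem stmt_5 (p : ℕ) (hp : p.Prime) (hodd : Odd p) (hp3 : p % 3 = 2)
    (s : ℕ) (hs : 0 < s) (q : ℕ) (hq : q = p ^ (2 * s))
    (h₀ : ℕ) (hh₀ : 0 < h₀) (hdvd : h₀ ∣ p ^ s + 1) (h : ℕ) (hh : h = h₀ ^ 2)
    (t m : ℕ) (ht : 1 ≤ t) (htm : t < m)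
    (hm : (m : ℤ) ≤ 2 * ⌈((q : ℚ) + 2 * (p : ℚ) ^ s + 1 - 8 * (h : ℚ)) / (6 * (h : ℚ))⌉)
    (F : Type*) [Field F] [Fintype F] [DecidableEq F] (hF : Fintype.card F = q) :
    ExistsOptimalLRC F (3 * h * m) ((3 * h - 2) * t + 1) (3 * h * (m - t)) (3 * h - 2) 3 ∧
    ExistsOptimalLRC F (3 * h * m) (2 * t + 1) (3 * h * (m - t)) 2 (3 * h - 1) := by
  classical
  subst hq
  have hp5 : 5 ≤ p := by
    have := hp.two_le
    obtain ⟨c, hc⟩ := hodd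
    omega
  obtain ⟨hc2, hc3, hrc⟩ := char_facts p hp hp5 s F hF
  obtain ⟨w, hw⟩ := exists_w p hp3 s F hF
  obtain ⟨a, ha, hcnt⟩ := point_count p hp hodd hp3 s hs hF hrc hc3 w hw
  obtain ⟨hfin, hcard⟩ := WC_card a ha hc2 hc3
  rw [hcnt] at hcard
  obtain ⟨om, E⟩ := WC_EC a w ha hc2 hc3 hw
  have hsq : p ^ (2 * s) + 2 * p ^ s + 1 = (p ^ s + 1) ^ 2 := by
    rw [mul_comm 2 s, pow_mul]; ring
  obtain ⟨H, hH, hHom⟩ := exists_ord_sq h₀ om E.trace hh₀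
    (by rw [hcard, hsq]; exact pow_dvd_pow_of_dvd hdvd 2)
  letI : Fintype (WC a).Point := Fintype.ofFinite _
  have hhpos : 0 < h := by rw [hh]; positivity
  refine codes_of_EC E hc2 hc3 ha hw H (Finset.univ.filter (fun P => P ∈ H)) (by simp) hHom
    h t m ?_ ht htm ?_
  · rw [hh, ← hH, Nat.card_eq_fintype_card, Fintype.card_subtype]
  · intro k hk
    rw [← Nat.card_eq_fintype_card, hcard] at hk
    have hkq : ((p ^ (2 * s) : ℕ) : ℚ) + 2 * (p : ℚ) ^ s + 1 ≤ 7 * h + 6 * h * k := by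
      exact_mod_cast hk
    have hhq : (0 : ℚ) < h := by exact_mod_cast hhpos
    have hce : ⌈(((p ^ (2 * s) : ℕ) : ℚ) + 2 * (p : ℚ) ^ s + 1 - 8 * (h : ℚ)) / (6 * (h : ℚ))⌉
        ≤ (k : ℤ) := by
      rw [Int.ceil_le, div_le_iff₀ (by positivity), Int.cast_natCast]
      nlinarith
    omega
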